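/- Let R be a commutative Noetherian ring and let C be a semidualizing R-module. (i) If C is pointwise dualizing, M is a cotorsion R-module, and φ: F → M is a flat cover of M, then C-id_R(F) ≤ C-id_R(M). (ii) Conversely, if for every R-module M and every flat cover φ: F → M one has C-id_R(F) ≤ C-id_R(M), then C is pointwise dualizing. -/

import Mathlib

/-!
The condition `C-id(F) ≤ n` for a flat module `F` is controlled by the finitely generated modules
`Ext^{n+1}(R/I, C)`: by Baer's criterion (`EV_of_ideals`) and flatness (`EV_tensor_iff`) it means
that `F ⊗ Ext^{n+1}(R/I, C) = 0` for every ideal `I`. All uses of Tor are replaced by Ext into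
duals `Hom(-, E)`, where `E` is an injective cogenerator.

*Pointwise dualizing modules have the inequality.* Locally, `C` has finite injective dimension and
no self-extensions, so `Ext^j(N, C)` is zero for `j` above the depth (`local_lemma`). Globally this
says that `𝔞 = ann Ext^j(N, C)` satisfies `Ext^i(R/𝔞, C) = 0` for all `i < j` (`grade_condition`).
Suppose `C ⊗ M` has injective dimension at most `n`. Then `M ≅ Hom(C, C ⊗ M)` (`bass`,
`unit_bijective`), and shifting dimension along an injective resolution of `C ⊗ M` gives
`R/𝔞 ⊗ Hom(F, M) = 0` for `𝔞 = ann Ext^{n+1}(R/I, C)` (`tensor_hom_vanish`). Cotorsion of `M` keeps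
the sequences `Hom(F, Hom(C, -))` exact, and the terms belonging to injective modules are governed
by the flatness of `Hom` between injective modules (`flat_hom_injective`). Hence the flat cover `φ`
lies in `𝔞 Hom(F, M)`, and the defining property of a cover turns this into `F = 𝔞 F`
(`cover_smul_top`), so that `F ⊗ Ext^{n+1}(R/I, C) = 0`.

*Conversely*, fix a maximal ideal `m`. Killing a maximal `C`-regular sequence in `m` produces a
quotient `A` of `C` with a nonzero element killed by `m`, while `C ⊗ Hom(A, E) ≅ Hom(Hom(C, A), E)`
has injective dimension at most some `l` (`exists_socle`, `theta_bijective`). If `I` is the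
injective hull of `A`, then `F = Hom(I, E) → Hom(A, E)` is a flat cover (`exists_flat_cover`). Its
minimality (`hull_end`) is proved by peeling off the `p`-power torsion of `I` for a maximal
associated prime `p`: there the difference between the identity and an endomorphism over
`Hom(A, E)` is locally nilpotent. The hypothesis now gives `F ⊗ Ext^{l+1}(R/J, C) = 0` for every
ideal `J`. Since `A` has `m`-torsion, `F ≠ m F`, so Nakayama's lemma makes `Ext^{l+1}(R/J, C)`
vanish at `m`, and `C_m` has injective dimension at most `l`.
-/

open CategoryTheory

universe u

noncomputable section

variable (R : Type u) [CommRing R]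

/-- The Ext module `Ext^i_R(M, N)`, via the derived functor definition. -/
noncomputable def extM (M N : Type u) [AddCommGroup M] [Module R M]
    [AddCommGroup N] [Module R N] (i : ℕ) : ModuleCat R :=
  ((Ext R (ModuleCat.{u} R) i).obj (Opposite.op (ModuleCat.of R M))).obj (ModuleCat.of R N)

/-- The Tor module `Tor_i^R(M, N)`, via the derived functor definition. -/
noncomputable def torM (M N : Type u) [AddCommGroup M] [Module R M]
    [AddCommGroup N] [Module R N] (i : ℕ) : ModuleCat R :=
  ((Tor (ModuleCat.{u} R) i).obj (ModuleCat.of R M)).obj (ModuleCat.of R N)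

/-- `C` is a semidualizing `R`-module: it is finitely generated, the homothety map
`R → Hom_R(C,C)` is bijective, and `Ext^i_R(C,C) = 0` for all `i > 0`. -/
def IsSemidualizing (C : Type u) [AddCommGroup C] [Module R C] : Prop :=
  Module.Finite R C ∧
  Function.Bijective (fun r : R => r • (LinearMap.id : C →ₗ[R] C)) ∧
  ∀ i : ℕ, 0 < i → Subsingleton (extM R C C i)

/-- Injective dimension of a module, characterized via vanishing of Ext. -/
noncomputable def injDim (M : Type u) [AddCommGroup M] [Module R M] : ℕ∞ :=
  sInf {n : ℕ∞ | ∀ (N : Type u) (_ : AddCommGroup N) (_ : Module R N) (i : ℕ),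
    n < i → Subsingleton (extM R N M i)}

/-- Flat dimension of a module, characterized via vanishing of Tor. -/
noncomputable def flatDim (M : Type u) [AddCommGroup M] [Module R M] : ℕ∞ :=
  sInf {n : ℕ∞ | ∀ (N : Type u) (_ : AddCommGroup N) (_ : Module R N) (i : ℕ),
    n < i → Subsingleton (torM R N M i)}

/-- The length of a module, as the height of `⊤` in its submodule lattice. -/
noncomputable def mLength (M : Type u) [AddCommGroup M] [Module R M] : ℕ∞ :=
  Order.height (⊤ : Submodule R M)

/-- Depth of a module over a local ring: the least `i` with `Ext^i(k, M) ≠ 0`. -/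
noncomputable def depth [IsLocalRing R] (M : Type u) [AddCommGroup M] [Module R M] : ℕ∞ :=
  sInf {n : ℕ∞ | ∃ i : ℕ, n = i ∧ Nontrivial (extM R (IsLocalRing.ResidueField R) M i)}

/-- Depth, as a natural number. -/
noncomputable def depthNat [IsLocalRing R] (M : Type u) [AddCommGroup M] [Module R M] : ℕ :=
  sInf {i : ℕ | Nontrivial (extM R (IsLocalRing.ResidueField R) M i)}

/-- The type of a module: `r_R(M) = dim_k Ext^t_R(k, M)` where `t = depth_R(M)`. -/
noncomputable def rtype [IsLocalRing R] (M : Type u) [AddCommGroup M] [Module R M] : ℕ∞ :=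
  mLength R (extM R (IsLocalRing.ResidueField R) M (depthNat R M))

/-- A dualizing module: a semidualizing module of finite injective dimension. -/
def IsDualizing (C : Type u) [AddCommGroup C] [Module R C] : Prop :=
  IsSemidualizing R C ∧ injDim R C < ⊤

/-- A pointwise dualizing module: the localization at every maximal ideal is dualizing. -/
def IsPointwiseDualizing (C : Type u) [AddCommGroup C] [Module R C] : Prop :=
  IsSemidualizing R C ∧ ∀ (p : Ideal R) [p.IsPrime], p.IsMaximal →
    IsDualizing (Localization.AtPrime p) (LocalizedModule p.primeCompl C)

/-- Height of a prime ideal. -/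
noncomputable def primeHeight (p : Ideal R) [hp : p.IsPrime] : ℕ∞ :=
  Order.height (⟨p, hp⟩ : PrimeSpectrum R)

/-- A totally `C`-reflexive module. -/
def IsTotallyCReflexive (C M : Type u) [AddCommGroup C] [Module R C]
    [AddCommGroup M] [Module R M] : Prop :=
  Module.Finite R M ∧
  Function.Bijective ((LinearMap.id : (M →ₗ[R] C) →ₗ[R] (M →ₗ[R] C)).flip) ∧
  ∀ i : ℕ, 0 < i →
    Subsingleton (extM R M C i) ∧ Subsingleton (extM R (M →ₗ[R] C) C i)

/-- `G_C`-dimension of `M` is at most `n`. -/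
def gcDimLE (C : Type u) [AddCommGroup C] [Module R C] :
    ℕ → (M : Type u) → [AddCommGroup M] → [Module R M] → Prop
  | 0, M, _, _ => IsTotallyCReflexive R C M
  | n+1, M, _, _ => ∃ (G K : Type u) (_ : AddCommGroup G) (_ : Module R G)
      (_ : AddCommGroup K) (_ : Module R K) (f : K →ₗ[R] G) (g : G →ₗ[R] M),
      IsTotallyCReflexive R C G ∧ Function.Injective f ∧ Function.Surjective g ∧
      LinearMap.range f = LinearMap.ker g ∧ gcDimLE C n K

/-- `M` has finite `G_C`-dimension. -/
def HasFiniteGCDim (C M : Type u) [AddCommGroup C] [Module R C]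
    [AddCommGroup M] [Module R M] : Prop :=
  ∃ n : ℕ, gcDimLE R C n M

/-- A finitely generated module over a local ring is Cohen-Macaulay if its depth
equals its Krull dimension. -/
def IsCohenMacaulayModule [IsLocalRing R] (M : Type u) [AddCommGroup M] [Module R M] : Prop :=
  Module.Finite R M ∧ (depth R M : WithBot ℕ∞) = Order.krullDim (Module.support R M)

/-- The `S`-module structure on `Hom_R(S, M)` through the domain, for an `R`-algebra `S`. -/
instance homDomModule (S : Type u) [CommRing S] [Algebra R S]
    (M : Type u) [AddCommGroup M] [Module R M] : Module S (S →ₗ[R] M) where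
  smul s f := f.comp (LinearMap.mul R S s)
  one_smul f := by ext x; show f (1 * x) = f x; rw [one_mul]
  mul_smul s t f := by ext x; show f (s * t * x) = f (t * (s * x)); ring_nf
  smul_zero s := by ext x; rfl
  smul_add s f g := by ext x; rfl
  add_smul s t f := by
    ext x; show f ((s + t) * x) = f (s * x) + f (t * x); rw [add_mul, map_add]
  zero_smul f := by ext x; show f (0 * x) = 0; rw [zero_mul, map_zero]

/-- The Bass number `μ^i(p, M) = dim_{k(p)} Ext^i_{R_p}(k(p), M_p)`. -/
noncomputable def bassNumber (p : Ideal R) [p.IsPrime] (i : ℕ)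
    (M : Type u) [AddCommGroup M] [Module R M] : ℕ∞ :=
  mLength (Localization.AtPrime p)
    (extM (Localization.AtPrime p) (IsLocalRing.ResidueField (Localization.AtPrime p))
      (LocalizedModule p.primeCompl M) i)

/-- The dual Bass number `π_i(p, M) = dim_{k(p)} Tor_i^{R_p}(k(p), Hom_R(R_p, M))`. -/
noncomputable def dualBassNumber (p : Ideal R) [p.IsPrime] (i : ℕ)
    (M : Type u) [AddCommGroup M] [Module R M] : ℕ∞ :=
  mLength (Localization.AtPrime p)
    (torM (Localization.AtPrime p) (IsLocalRing.ResidueField (Localization.AtPrime p))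
      (Localization.AtPrime p →ₗ[R] M) i)

/-- A cotorsion module: `Ext^1_R(F, M) = 0` for every flat module `F`. -/
def IsCotorsion (M : Type u) [AddCommGroup M] [Module R M] : Prop :=
  ∀ (F : Type u) (_ : AddCommGroup F) (_ : Module R F), Module.Flat R F →
    Subsingleton (extM R F M 1)

/-- A `C`-flat module: one isomorphic to `C ⊗_R F` with `F` flat. -/
def IsCFlat (C M : Type u) [AddCommGroup C] [Module R C] [AddCommGroup M] [Module R M] : Prop :=
  ∃ (F : Type u) (_ : AddCommGroup F) (_ : Module R F), Module.Flat R F ∧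
    Nonempty (M ≃ₗ[R] TensorProduct R C F)

/-- A `C`-injective module: one isomorphic to `Hom_R(C, I)` with `I` injective. -/
def IsCInjective (C M : Type u) [AddCommGroup C] [Module R C]
    [AddCommGroup M] [Module R M] : Prop :=
  ∃ (I : Type u) (_ : AddCommGroup I) (_ : Module R I), Module.Injective R I ∧
    Nonempty (M ≃ₗ[R] (C →ₗ[R] I))

/-- `φ : F → M` is a flat cover of `M`. -/
def IsFlatCover (M F : Type u) [AddCommGroup M] [Module R M] [AddCommGroup F] [Module R F]
    (φ : F →ₗ[R] M) : Prop :=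
  Module.Flat R F ∧
  (∀ (G : Type u) (_ : AddCommGroup G) (_ : Module R G), Module.Flat R G →
    ∀ ψ : G →ₗ[R] M, ∃ h : G →ₗ[R] F, φ.comp h = ψ) ∧
  (∀ ψ : F →ₗ[R] F, φ.comp ψ = φ → Function.Bijective ψ)

/-- `E` is an injective hull of `N`: `E` is injective and contains `N` as an
essential submodule. -/
def IsInjectiveHull (N E : Type u) [AddCommGroup N] [Module R N]
    [AddCommGroup E] [Module R E] : Prop :=
  Module.Injective R E ∧ ∃ ι : N →ₗ[R] E, Function.Injective ι ∧
    ∀ K : Submodule R E, K ≠ ⊥ → K ⊓ LinearMap.range ι ≠ ⊥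

end

/-! ### Vanishing of Ext -/

namespace PwDual

/-- `EV R N X i` says that `Ext^i_R(N, X)` vanishes, with Mathlib's derived-category `Ext`. -/
def EV (R : Type u) [CommRing R] (N X : Type u) [AddCommGroup N] [Module R N]
    [AddCommGroup X] [Module R X] (i : ℕ) : Prop :=
  Subsingleton (Abelian.Ext (ModuleCat.of R N) (ModuleCat.of R X) i)

/-- The short exact sequence in `ModuleCat R` attached to an injective, exact, surjective pair. -/
abbrev sc {R : Type u} [CommRing R] {A B D : Type u} [AddCommGroup A] [Module R A]
    [AddCommGroup B] [Module R B] [AddCommGroup D] [Module R D] (f : A →ₗ[R] B) (g : B →ₗ[R] D)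
    (h : Function.Exact f g) : ShortComplex (ModuleCat.{u} R) :=
  ShortComplex.mk (ModuleCat.ofHom f) (ModuleCat.ofHom g) (by
    ext x; simpa using h.apply_apply_eq_zero x)

section
variable {R : Type u} [CommRing R] {A B D : Type u} [AddCommGroup A] [Module R A]
    [AddCommGroup B] [Module R B] [AddCommGroup D] [Module R D] {f : A →ₗ[R] B} {g : B →ₗ[R] D}

lemma sc_shortExact (hf : Function.Injective f) (h : Function.Exact f g)
    (hg : Function.Surjective g) : (sc f g h).ShortExact where
  exact := by
    rw [ShortComplex.ShortExact.moduleCat_exact_iff_function_exact]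
    exact h
  mono_f := (ModuleCat.mono_iff_injective _).2 hf
  epi_g := (ModuleCat.epi_iff_surjective _).2 hg

section contra
variable {Y : Type u} [AddCommGroup Y] [Module R Y] (hf : Function.Injective f)
    (h : Function.Exact f g) (hg : Function.Surjective g)
include hf h hg

/-- In `0 → A → B → D → 0` the subscript of `EV.contra₁`, `EV.contra₂`, `EV.contra₃` names the
module (`A`, `B`, `D`) whose `Ext` into `Y` is shown to vanish. -/
lemma EV.contra₁ {i : ℕ} (hB : EV R B Y i) (hD : EV R D Y (i + 1)) : EV R A Y i := by
  refine subsingleton_of_forall_eq 0 fun x => ?_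
  obtain ⟨y, hy⟩ := Abelian.Ext.contravariant_sequence_exact₁ (sc_shortExact hf h hg) _ x
    (add_comm 1 i) (@Subsingleton.elim _ hD _ _)
  rw [← hy, @Subsingleton.elim _ hB y 0]; simp

lemma EV.contra₂ {i : ℕ} (hA : EV R A Y i) (hD : EV R D Y i) : EV R B Y i := by
  refine subsingleton_of_forall_eq 0 fun x => ?_
  obtain ⟨y, hy⟩ := Abelian.Ext.contravariant_sequence_exact₂ (sc_shortExact hf h hg) _ x
    (@Subsingleton.elim _ hA _ _)
  rw [← hy, @Subsingleton.elim _ hD y 0]; simp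

lemma EV.contra₃ {i : ℕ} (hA : EV R A Y i) (hB : EV R B Y (i + 1)) : EV R D Y (i + 1) := by
  refine subsingleton_of_forall_eq 0 fun x => ?_
  obtain ⟨y, hy⟩ := Abelian.Ext.contravariant_sequence_exact₃ (sc_shortExact hf h hg) _ x
    (@Subsingleton.elim _ hB _ _) (add_comm 1 i)
  rw [← hy, @Subsingleton.elim _ hA y 0]; simp

/-- In `0 → A → B → D → 0` the subscript of `EV.cov₁`, `EV.cov₂`, `EV.cov₃` names the module
(`A`, `B`, `D`) into which the `Ext` from `Y` is shown to vanish. -/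
lemma EV.cov₁ {i : ℕ} (hD : EV R Y D i) (hB : EV R Y B (i + 1)) : EV R Y A (i + 1) := by
  refine subsingleton_of_forall_eq 0 fun x => ?_
  obtain ⟨y, hy⟩ := Abelian.Ext.covariant_sequence_exact₁ _ (sc_shortExact hf h hg) x
    (@Subsingleton.elim _ hB _ _) rfl
  rw [← hy, @Subsingleton.elim _ hD y 0]; simp

lemma EV.cov₂ {i : ℕ} (hA : EV R Y A i) (hD : EV R Y D i) : EV R Y B i := by
  refine subsingleton_of_forall_eq 0 fun x => ?_
  obtain ⟨y, hy⟩ := Abelian.Ext.covariant_sequence_exact₂ _ (sc_shortExact hf h hg) x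
    (@Subsingleton.elim _ hD _ _)
  rw [← hy, @Subsingleton.elim _ hA y 0]; simp

lemma EV.cov₃ {i : ℕ} (hB : EV R Y B i) (hA : EV R Y A (i + 1)) : EV R Y D i := by
  refine subsingleton_of_forall_eq 0 fun x => ?_
  obtain ⟨y, hy⟩ := Abelian.Ext.covariant_sequence_exact₃ _ (sc_shortExact hf h hg) x
    rfl (@Subsingleton.elim _ hA _ _)
  rw [← hy, @Subsingleton.elim _ hB y 0]; simp

end contra

lemma EV.of_equiv {N N' X X' : Type u} [AddCommGroup N] [Module R N] [AddCommGroup N'] [Module R N']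
    [AddCommGroup X] [Module R X] [AddCommGroup X'] [Module R X'] (e : N ≃ₗ[R] N') (e' : X ≃ₗ[R] X')
    {i : ℕ} (hv : EV R N X i) : EV R N' X' i := by
  have h1 : EV R N' X i := by
    refine subsingleton_of_forall_eq 0 fun x => ?_
    have : (Abelian.Ext.mk₀ (ModuleCat.ofHom e.symm.toLinearMap)).comp
        ((Abelian.Ext.mk₀ (ModuleCat.ofHom e.toLinearMap)).comp x (zero_add i)) (zero_add i) = x := by
      rw [Abelian.Ext.mk₀_comp_mk₀_assoc]
      convert Abelian.Ext.mk₀_id_comp x using 2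
      congr 1
      ext y; simp
    rw [← this, @Subsingleton.elim _ hv ((Abelian.Ext.mk₀ _).comp x _) 0]; simp
  refine subsingleton_of_forall_eq 0 fun x => ?_
  have : (x.comp (Abelian.Ext.mk₀ (ModuleCat.ofHom e'.symm.toLinearMap)) (add_zero i)).comp
      (Abelian.Ext.mk₀ (ModuleCat.ofHom e'.toLinearMap)) (add_zero i) = x := by
    rw [Abelian.Ext.comp_assoc_of_third_deg_zero, Abelian.Ext.mk₀_comp_mk₀]
    convert Abelian.Ext.comp_mk₀_id x using 2
    congr 1
    ext y; simp
  rw [← this, @Subsingleton.elim _ h1 (x.comp (Abelian.Ext.mk₀ _) _) 0]; simp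

variable {N X : Type u} [AddCommGroup N] [Module R N] [AddCommGroup X] [Module R X]

lemma EV_zero_iff : EV R N X 0 ↔ Subsingleton (N →ₗ[R] X) := by
  have e := (Abelian.Ext.addEquiv₀ (X := ModuleCat.of R N) (Y := ModuleCat.of R X)).toEquiv.trans
    (ModuleCat.homEquiv)
  exact e.subsingleton_congr

lemma EV.of_projective [Module.Projective R N] {i : ℕ} (hi : 0 < i) : EV R N X i := by
  obtain ⟨i, rfl⟩ := Nat.exists_eq_succ_of_ne_zero hi.ne'
  have : Projective (ModuleCat.of R N) := inferInstance
  exact subsingleton_of_forall_eq 0 fun x => Abelian.Ext.eq_zero_of_projective x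

lemma EV.of_injective [Module.Injective R X] {i : ℕ} (hi : 0 < i) : EV R N X i := by
  obtain ⟨i, rfl⟩ := Nat.exists_eq_succ_of_ne_zero hi.ne'
  have : Injective (ModuleCat.of R X) := Module.injective_object_of_injective_module R X
  exact subsingleton_of_forall_eq 0 fun x => Abelian.Ext.eq_zero_of_injective x

/-- If `Ext^1(D, X) = 0` then every map `A → X` extends to `B`. -/
lemma EV.extend (hf : Function.Injective f)
    (h : Function.Exact f g) (hg : Function.Surjective g) (hv : EV R D X 1) (k : A →ₗ[R] X) :
    ∃ l : B →ₗ[R] X, l ∘ₗ f = k := by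
  obtain ⟨y, hy⟩ := Abelian.Ext.contravariant_sequence_exact₁ (sc_shortExact hf h hg) _
    (Abelian.Ext.mk₀ (ModuleCat.ofHom k)) (add_comm 1 0) (@Subsingleton.elim _ hv _ _)
  obtain ⟨y, rfl⟩ := Abelian.Ext.addEquiv₀.symm.surjective y
  rw [Abelian.Ext.addEquiv₀_symm_apply, Abelian.Ext.mk₀_comp_mk₀] at hy
  have := (Abelian.Ext.mk₀_bijective _ _).1 hy
  refine ⟨y.hom, ?_⟩
  exact congrArg ModuleCat.Hom.hom this

/-- If `Ext^1(X, A) = 0` then every map `X → D` lifts to `B`. -/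
lemma EV.lift (hf : Function.Injective f)
    (h : Function.Exact f g) (hg : Function.Surjective g) (hv : EV R X A 1) (k : X →ₗ[R] D) :
    ∃ l : X →ₗ[R] B, g ∘ₗ l = k := by
  obtain ⟨y, hy⟩ := Abelian.Ext.covariant_sequence_exact₃ _ (sc_shortExact hf h hg)
    (Abelian.Ext.mk₀ (ModuleCat.ofHom k)) rfl (@Subsingleton.elim _ hv _ _)
  obtain ⟨y, rfl⟩ := Abelian.Ext.addEquiv₀.symm.surjective y
  rw [Abelian.Ext.addEquiv₀_symm_apply, Abelian.Ext.mk₀_comp_mk₀] at hy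
  have := (Abelian.Ext.mk₀_bijective _ _).1 hy
  refine ⟨y.hom, ?_⟩
  exact congrArg ModuleCat.Hom.hom this

/-- A converse to `EV.extend`, when `Ext^1(B, X) = 0`. -/
lemma EV_one_of_extend (hf : Function.Injective f)
    (h : Function.Exact f g) (hg : Function.Surjective g) (hB : EV R B X 1)
    (H : ∀ k : A →ₗ[R] X, ∃ l : B →ₗ[R] X, l ∘ₗ f = k) : EV R D X 1 := by
  refine subsingleton_of_forall_eq 0 fun x => ?_
  obtain ⟨y, hy⟩ := Abelian.Ext.contravariant_sequence_exact₃ (sc_shortExact hf h hg) _ x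
    (@Subsingleton.elim _ hB _ _) (add_comm 1 0)
  obtain ⟨y, rfl⟩ := Abelian.Ext.addEquiv₀.symm.surjective y
  obtain ⟨l, hl⟩ := H y.hom
  have : y = (sc f g h).f ≫ ModuleCat.ofHom l := by
    ext1; exact hl.symm
  rw [Abelian.Ext.addEquiv₀_symm_apply, this, ← Abelian.Ext.mk₀_comp_mk₀,
    ← Abelian.Ext.comp_assoc_of_second_deg_zero] at hy
  rw [← hy, ShortComplex.ShortExact.extClass_comp, Abelian.Ext.zero_comp]

/-- A converse to `EV.lift`, when `Ext^1(X, B) = 0`. -/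
lemma EV_one_of_lift (hf : Function.Injective f)
    (h : Function.Exact f g) (hg : Function.Surjective g) (hB : EV R X B 1)
    (H : ∀ k : X →ₗ[R] D, ∃ l : X →ₗ[R] B, g ∘ₗ l = k) : EV R X A 1 := by
  refine subsingleton_of_forall_eq 0 fun x => ?_
  obtain ⟨y, hy⟩ := Abelian.Ext.covariant_sequence_exact₁ _ (sc_shortExact hf h hg) x
    (@Subsingleton.elim _ hB _ _) rfl
  obtain ⟨y, rfl⟩ := Abelian.Ext.addEquiv₀.symm.surjective y
  obtain ⟨l, hl⟩ := H y.hom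
  have : y = ModuleCat.ofHom l ≫ (sc f g h).g := by
    ext1; exact hl.symm
  rw [Abelian.Ext.addEquiv₀_symm_apply, this, ← Abelian.Ext.mk₀_comp_mk₀,
    Abelian.Ext.comp_assoc_of_second_deg_zero] at hy
  rw [← hy, ShortComplex.ShortExact.comp_extClass, Abelian.Ext.comp_zero]

/-- The derived functor `Ext` and the derived category `Ext` vanish simultaneously: both are
computed by a projective resolution of the first argument. -/
lemma extM_subsingleton_iff {i : ℕ} (hi : 0 < i) : Subsingleton (extM R N X i) ↔ EV R N X i := by
  obtain ⟨p, rfl⟩ : ∃ p, i = p + 1 := ⟨i - 1, by omega⟩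
  let P := projectiveResolution (ModuleCat.of R N)
  have e := P.isoExt (R := R) (p + 1) (ModuleCat.of R X)
  rw [extM, ← ModuleCat.isZero_iff_subsingleton, e.isZero_iff,
    ← HomologicalComplex.exactAt_iff_isZero_homology,
    HomologicalComplex.exactAt_iff' _ p (p + 1) (p + 2) (by simp) (by simp),
    ShortComplex.moduleCat_exact_iff]
  constructor
  · intro H
    refine subsingleton_of_forall_eq 0 fun x => ?_
    obtain ⟨f, hf, rfl⟩ := P.extMk_surjective x (p + 2) rfl
    rw [P.extMk_eq_zero_iff f (p + 2) rfl hf p rfl]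
    exact H f hf
  · intro H f hf
    exact (P.extMk_eq_zero_iff f (p + 2) rfl hf p rfl).1 (@Subsingleton.elim _ H _ _)

end
end PwDual

/-! ### Injective dimension and cogenerators -/

namespace PwDual
section
variable {R : Type u} [CommRing R]

/-- The infimum defining `injDim` is attained, so a bound on it is a vanishing statement. -/
lemma injDim_le_iff {M : Type u} [AddCommGroup M] [Module R M] {n : ℕ} :
    injDim R M ≤ n ↔ ∀ (N : Type u) (_ : AddCommGroup N) (_ : Module R N) (i : ℕ),
      n < i → EV R N M i := by
  constructor
  · intro h N _ _ i hi
    have hne : {n : ℕ∞ | ∀ (N : Type u) (_ : AddCommGroup N) (_ : Module R N) (i : ℕ),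
        n < i → Subsingleton (extM R N M i)}.Nonempty := ⟨⊤, by simp⟩
    exact (extM_subsingleton_iff (by omega)).1
      (csInf_mem hne N ‹_› ‹_› i (lt_of_le_of_lt h (by exact_mod_cast hi)))
  · intro h
    refine sInf_le fun N _ _ i hi => ?_
    have hi : n < i := by exact_mod_cast hi
    exact (extM_subsingleton_iff (by omega)).2 (h N _ _ i hi)

/-- Every module embeds into an injective one. -/
lemma exists_injective_embedding (M : Type u) [AddCommGroup M] [Module R M] :
    ∃ (I : Type u) (_ : AddCommGroup I) (_ : Module R I) (f : M →ₗ[R] I),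
      Module.Injective R I ∧ Function.Injective f := by
  let I := Injective.under (ModuleCat.of R M)
  refine ⟨I, inferInstance, inferInstance, (Injective.ι (ModuleCat.of R M)).hom, ?_, ?_⟩
  · exact Module.injective_module_of_injective_object R I (inj := inferInstanceAs (Injective I))
  · exact (ModuleCat.mono_iff_injective _).1 inferInstance

lemma exact_subtype_ker {A B : Type u} [AddCommGroup A] [Module R A] [AddCommGroup B] [Module R B]
    (f : A →ₗ[R] B) : Function.Exact (LinearMap.ker f).subtype f := by
  rw [LinearMap.exact_iff]; simp

lemma exact_mkQ_range {A B : Type u} [AddCommGroup A] [Module R A] [AddCommGroup B] [Module R B]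
    (f : A →ₗ[R] B) : Function.Exact f (LinearMap.range f).mkQ := by
  rw [LinearMap.exact_iff]; simp

/-- Baer's criterion for injective dimension: a bound may be tested on cyclic modules, in a single
degree. -/
lemma EV_of_ideals (n : ℕ) : ∀ (M : Type u) [AddCommGroup M] [Module R M],
    (∀ I : Ideal R, EV R (R ⧸ I) M (n + 1)) →
    ∀ (N : Type u) [AddCommGroup N] [Module R N] (i : ℕ), n < i → EV R N M i := by
  induction n with
  | zero =>
    intro M _ _ h N _ _ i hi
    have : Module.Injective R M := by
      rw [← Module.Baer.iff_injective]
      intro I g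
      obtain ⟨l, hl⟩ := (h I).extend (f := Submodule.subtype I) (g := I.mkQ)
        I.injective_subtype (by rw [LinearMap.exact_iff]; simp) I.mkQ_surjective g
      exact ⟨l, fun x hx => by simpa using congrArg (fun k => k ⟨x, hx⟩) hl⟩
    exact EV.of_injective hi
  | succ n ih =>
    intro M _ _ h N _ _ i hi
    obtain ⟨I, _, _, f, hI, hf⟩ := exists_injective_embedding (R := R) M
    obtain ⟨i, rfl⟩ : ∃ j, i = j + 1 := ⟨i - 1, by omega⟩
    have h1 := ih (I ⧸ LinearMap.range f) (fun J => EV.cov₃ hf (exact_mkQ_range f)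
      (Submodule.mkQ_surjective _) (EV.of_injective (by omega)) (h J)) N i (by omega)
    exact EV.cov₁ hf (exact_mkQ_range f) (Submodule.mkQ_surjective _) h1
      (EV.of_injective (by omega))

/-- The character module of `R` is an injective cogenerator. -/
lemma exists_injective_cogenerator (R : Type u) [CommRing R] :
    ∃ (E : Type u) (_ : AddCommGroup E) (_ : Module R E),
      Module.Injective R E ∧ ∀ (Y : Type u) [AddCommGroup Y] [Module R Y] (y : Y),
        y ≠ 0 → ∃ f : Y →ₗ[R] E, f y ≠ 0 := by
  refine ⟨CharacterModule R, inferInstance, inferInstance,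
    Module.Flat.iff_characterModule_injective.1 inferInstance, ?_⟩
  intro Y _ _ y hy
  obtain ⟨c, hc⟩ := CharacterModule.exists_character_apply_ne_zero_of_ne_zero hy
  refine ⟨CharacterModule.curry (c.comp (TensorProduct.rid R Y).toAddMonoidHom), fun h => hc ?_⟩
  have := DFunLike.congr_fun h (1 : R)
  change c ((1 : R) • y) = 0 at this
  rwa [one_smul] at this

/-- A finitely generated module is a quotient of a finite free module by a finitely generated
kernel. -/
lemma exists_pres [IsNoetherianRing R] (N : Type u) [AddCommGroup N] [Module R N]
    [Module.Finite R N] : ∃ (n : ℕ) (f : (Fin n → R) →ₗ[R] N), Function.Surjective f ∧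
      Module.Finite R (LinearMap.ker f) := by
  obtain ⟨n, f, hf⟩ := Module.Finite.exists_fin' R N
  exact ⟨n, f, hf, inferInstance⟩

end
end PwDual

/-! ### Ext and tensor products with flat modules -/

namespace PwDual
open TensorProduct
section
variable {R : Type u} [CommRing R]

section diagrams
variable {A₁ A₂ A₃ B₁ B₂ B₃ : Type*} [AddCommGroup A₁] [AddCommGroup A₂] [AddCommGroup A₃]
  [AddCommGroup B₁] [AddCommGroup B₂] [AddCommGroup B₃] [Module R A₁] [Module R A₂] [Module R A₃]
  [Module R B₁] [Module R B₂] [Module R B₃] {f₁ : A₁ →ₗ[R] A₂} {f₂ : A₂ →ₗ[R] A₃}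
  {g₁ : B₁ →ₗ[R] B₂} {g₂ : B₂ →ₗ[R] B₃} {i₁ : A₁ →ₗ[R] B₁} {i₂ : A₂ →ₗ[R] B₂} {i₃ : A₃ →ₗ[R] B₃}

/-- A form of the five lemma for left exact rows. -/
lemma bij_left (hf : Function.Injective f₁) (hfe : Function.Exact f₁ f₂)
    (hg : Function.Injective g₁) (hge : Function.Exact g₁ g₂)
    (h1 : ∀ x, i₂ (f₁ x) = g₁ (i₁ x)) (h2 : ∀ x, i₃ (f₂ x) = g₂ (i₂ x))
    (hi₂ : Function.Bijective i₂) (hi₃ : Function.Injective i₃) : Function.Bijective i₁ := by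
  refine ⟨fun x y hxy => hf (hi₂.1 (by rw [h1, h1, hxy])), fun b => ?_⟩
  obtain ⟨a, ha⟩ := hi₂.2 (g₁ b)
  have : f₂ a = 0 := hi₃ (by rw [h2, ha, hge.apply_apply_eq_zero, map_zero])
  obtain ⟨a', rfl⟩ := (hfe a).1 this
  exact ⟨a', hg (by rw [← h1, ha])⟩

/-- A form of the five lemma for right exact rows. -/
lemma bij_right (hf : Function.Surjective f₂) (hfe : Function.Exact f₁ f₂)
    (hg : Function.Surjective g₂) (hge : Function.Exact g₁ g₂)
    (h1 : ∀ x, i₂ (f₁ x) = g₁ (i₁ x)) (h2 : ∀ x, i₃ (f₂ x) = g₂ (i₂ x))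
    (hi₂ : Function.Bijective i₂) (hi₁ : Function.Surjective i₁) : Function.Bijective i₃ := by
  constructor
  · rw [injective_iff_map_eq_zero]
    intro a ha
    obtain ⟨a, rfl⟩ := hf a
    rw [h2] at ha
    obtain ⟨b, hb⟩ := (hge _).1 ha
    obtain ⟨a', rfl⟩ := hi₁ b
    rw [← h1] at hb
    rw [← hi₂.1 hb, hfe.apply_apply_eq_zero]
  · intro b
    obtain ⟨b, rfl⟩ := hg b
    obtain ⟨a, rfl⟩ := hi₂.2 b
    exact ⟨f₂ a, h2 a⟩

end diagrams

section homs
variable {K P N : Type*} [AddCommGroup K] [Module R K] [AddCommGroup P] [Module R P]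
  [AddCommGroup N] [Module R N] {f : K →ₗ[R] P} {g : P →ₗ[R] N}
  (X : Type*) [AddCommGroup X] [Module R X]

lemma lcomp_injective (hg : Function.Surjective g) : Function.Injective (g.lcomp R X) :=
  fun a b hab => LinearMap.ext fun x => by
    obtain ⟨y, rfl⟩ := hg x; exact congrArg (fun k => k y) hab

lemma lcomp_exact (hg : Function.Surjective g) (h : Function.Exact f g) :
    Function.Exact (g.lcomp R X) (f.lcomp R X) := by
  intro k
  constructor
  · intro hk
    have hker : LinearMap.ker g ≤ LinearMap.ker k := by
      intro x hx
      obtain ⟨y, rfl⟩ := (h x).1 hx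
      exact congrArg (fun k => k y) hk
    refine ⟨((LinearMap.ker g).liftQ k hker) ∘ₗ (g.quotKerEquivOfSurjective hg).symm, ?_⟩
    ext x
    have : (g.quotKerEquivOfSurjective hg).symm (g x) = (LinearMap.ker g).mkQ x := by
      rw [LinearEquiv.symm_apply_eq]; simp
    simp [this]
  · rintro ⟨k, rfl⟩
    ext x; simp [h.apply_apply_eq_zero]

end homs

/-- The case of a free module in `hom_tensor_bijective`. -/
lemma hom_tensor_bijective_free (n : ℕ) (G C : Type*) [AddCommGroup G] [Module R G]
    [AddCommGroup C] [Module R C] :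
    Function.Bijective (lTensorHomToHomLTensor (.id R) (Fin n → R) G C) := by
  let j (i : Fin n) : C →ₗ[R] ((Fin n → R) →ₗ[R] C) := LinearMap.smulRightₗ (LinearMap.proj i)
  have hj : ∀ i c x, j i c x = x i • c := fun i c x => rfl
  rw [Function.bijective_iff_has_inverse]
  refine ⟨fun φ => ∑ i, (j i).lTensor G (φ (Pi.single i 1)), fun x => ?_, fun φ => ?_⟩
  · have hsum : ∀ f : (Fin n → R) →ₗ[R] C, ∑ i, j i (f (Pi.single i 1)) = f := by
      intro f
      refine LinearMap.pi_ext' fun k => ?_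
      ext
      simp [hj, Pi.single_apply]
    induction x using TensorProduct.induction_on with
    | zero => simp
    | tmul g f => simp [← TensorProduct.tmul_sum, hsum]
    | add x y hx hy => simp only [map_add, LinearMap.add_apply, Finset.sum_add_distrib, hx, hy]
  · have key : ∀ (t : G ⊗[R] C) (i k : Fin n),
        lTensorHomToHomLTensor (.id R) (Fin n → R) G C ((j i).lTensor G t) (Pi.single k 1)
          = (Pi.single k 1 : Fin n → R) i • t := by
      intro t i k
      induction t using TensorProduct.induction_on with
      | zero => simp
      | tmul g c => simp [hj]
      | add x y hx hy => simp only [map_add, LinearMap.add_apply, hx, hy, smul_add]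
    refine LinearMap.pi_ext' fun k => ?_
    ext
    simp only [map_sum, LinearMap.sum_apply, LinearMap.comp_apply, LinearMap.single_apply, key]
    simp [Pi.single_apply]

/-- `G ⊗ Hom(N, C) ≅ Hom(N, G ⊗ C)` for `G` flat and `N` finitely presented. -/
lemma hom_tensor_bijective [IsNoetherianRing R] (N G C : Type u) [AddCommGroup N] [Module R N]
    [Module.Finite R N] [AddCommGroup G] [Module R G] [Module.Flat R G]
    [AddCommGroup C] [Module R C] :
    Function.Bijective (lTensorHomToHomLTensor (.id R) N G C) := by
  obtain ⟨n, b, hb, _⟩ := exists_pres (R := R) N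
  obtain ⟨m, a, ha, _⟩ := exists_pres (R := R) (LinearMap.ker b)
  have hab : Function.Exact ((LinearMap.ker b).subtype ∘ₗ a) b := by
    rw [LinearMap.exact_iff, LinearMap.range_comp, LinearMap.range_eq_top.2 ha]; simp
  refine bij_left (f₁ := (b.lcomp R C).lTensor G)
    (f₂ := (((LinearMap.ker b).subtype ∘ₗ a).lcomp R C).lTensor G)
    (g₁ := b.lcomp R (G ⊗[R] C)) (g₂ := ((LinearMap.ker b).subtype ∘ₗ a).lcomp R (G ⊗[R] C))
    (Module.Flat.lTensor_preserves_injective_linearMap _ (lcomp_injective C hb))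
    (Module.Flat.lTensor_exact _ (lcomp_exact C hb hab))
    (lcomp_injective _ hb) (lcomp_exact _ hb hab) ?_ ?_
    (hom_tensor_bijective_free n G C) (hom_tensor_bijective_free m G C).1
  all_goals
    intro x
    induction x using TensorProduct.induction_on with
    | zero => simp
    | tmul g f => ext; simp
    | add x y hx hy => simp only [map_add, hx, hy]

section ext
variable {K P N : Type u} [AddCommGroup K] [Module R K] [AddCommGroup P] [Module R P]
  [AddCommGroup N] [Module R N] {f : K →ₗ[R] P} {g : P →ₗ[R] N}

/-- The group `Ext^i_R(N, X)`, as an `R`-module. -/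
abbrev EX (R : Type u) [CommRing R] (N X : Type u) [AddCommGroup N] [Module R N]
    [AddCommGroup X] [Module R X] (i : ℕ) : Type u :=
  Abelian.Ext (ModuleCat.of R N) (ModuleCat.of R X) i

/-- Dimension shifting, as an isomorphism of `R`-modules. -/
lemma ext_shift [Module.Projective R P] (hf : Function.Injective f)
    (h : Function.Exact f g) (hg : Function.Surjective g)
    (X : Type u) [AddCommGroup X] [Module R X] (i : ℕ) (hi : 0 < i) :
    Nonempty (EX R K X i ≃ₗ[R] EX R N X (i + 1)) := by
  refine ⟨LinearEquiv.ofBijective ((sc_shortExact hf h hg).extClass.precompOfLinear R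
    (ModuleCat.of R X) (add_comm 1 i)) ⟨?_, fun x => ?_⟩⟩
  · rw [injective_iff_map_eq_zero]
    intro x hx
    obtain ⟨y, hy⟩ := Abelian.Ext.contravariant_sequence_exact₁ (sc_shortExact hf h hg) _ x
      (add_comm 1 i) hx
    rw [← hy, @Subsingleton.elim _ (EV.of_projective hi : EV R P X i) y 0]; simp
  · exact Abelian.Ext.contravariant_sequence_exact₃ (sc_shortExact hf h hg) _ x
      (@Subsingleton.elim _ (EV.of_projective (by omega) : EV R P X (i + 1)) _ _) (add_comm 1 i)

/-- `Ext^1(N, X)` is the cokernel of `Hom(P, X) → Hom(K, X)`. -/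
lemma ext_one [Module.Projective R P] (hf : Function.Injective f)
    (h : Function.Exact f g) (hg : Function.Surjective g)
    (X : Type u) [AddCommGroup X] [Module R X] :
    ∃ δ : (K →ₗ[R] X) →ₗ[R] EX R N X 1, Function.Surjective δ ∧
      Function.Exact (f.lcomp R X) δ := by
  let δ' := ((sc_shortExact hf h hg).extClass.precompOfLinear R
    (ModuleCat.of R X) (add_comm 1 0))
  let e : (K →ₗ[R] X) ≃ₗ[R] EX R K X 0 :=
    (ModuleCat.homLinearEquiv (S := R) (M := ModuleCat.of R K) (N := ModuleCat.of R X)).symm ≪≫ₗ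
      (Abelian.Ext.linearEquiv₀ (R := R)).symm
  have he : ∀ k, e k = Abelian.Ext.mk₀ (ModuleCat.ofHom k) := fun k => rfl
  refine ⟨δ' ∘ₗ e.toLinearMap, ?_, ?_⟩
  · intro x
    obtain ⟨y, hy⟩ := Abelian.Ext.contravariant_sequence_exact₃ (sc_shortExact hf h hg) _ x
      (@Subsingleton.elim _ (EV.of_projective (by omega) : EV R P X 1) _ _) (add_comm 1 0)
    refine ⟨e.symm y, ?_⟩
    change δ' (e (e.symm y)) = x
    rw [e.apply_symm_apply]
    exact hy
  · intro k
    constructor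
    · intro hk
      obtain ⟨y, hy⟩ := Abelian.Ext.contravariant_sequence_exact₁ (sc_shortExact hf h hg) _ (e k)
        (add_comm 1 0) hk
      obtain ⟨y, rfl⟩ := Abelian.Ext.addEquiv₀.symm.surjective y
      rw [Abelian.Ext.addEquiv₀_symm_apply, Abelian.Ext.mk₀_comp_mk₀, he] at hy
      exact ⟨y.hom, congrArg ModuleCat.Hom.hom ((Abelian.Ext.mk₀_bijective _ _).1 hy)⟩
    · rintro ⟨l, rfl⟩
      change (sc_shortExact hf h hg).extClass.comp (e (l ∘ₗ f)) (add_comm 1 0) = 0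
      have : ModuleCat.ofHom (l ∘ₗ f) = (sc f g h).f ≫ ModuleCat.ofHom l := rfl
      rw [he, this, ← Abelian.Ext.mk₀_comp_mk₀,
        ← Abelian.Ext.comp_assoc_of_second_deg_zero, ShortComplex.ShortExact.extClass_comp,
        Abelian.Ext.zero_comp]

end ext

/-- For `G` flat and `N` finitely generated over a noetherian ring,
`Ext^i(N, G ⊗ C)` vanishes if and only if `G ⊗ Ext^i(N, C)` does. -/
theorem EV_tensor_iff [IsNoetherianRing R] (G C : Type u) [AddCommGroup G] [Module R G]
    [Module.Flat R G] [AddCommGroup C] [Module R C] (i : ℕ) :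
    ∀ (N : Type u) [AddCommGroup N] [Module R N] [Module.Finite R N],
    EV R N (G ⊗[R] C) i ↔ Subsingleton (G ⊗[R] EX R N C i) := by
  induction i with
  | zero =>
    intro N _ _ _
    rw [EV_zero_iff]
    let e : (N →ₗ[R] C) ≃ₗ[R] EX R N C 0 :=
      (ModuleCat.homLinearEquiv (S := R) (M := ModuleCat.of R N) (N := ModuleCat.of R C)).symm ≪≫ₗ
      (Abelian.Ext.linearEquiv₀ (R := R)).symm
    rw [← (e.lTensor G).toEquiv.subsingleton_congr]
    exact (Equiv.ofBijective _ (hom_tensor_bijective (R := R) N G C)).subsingleton_congr.symm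
  | succ i ih =>
    intro N _ _ _
    obtain ⟨n, b, hb, _⟩ := exists_pres (R := R) N
    have hi := (LinearMap.ker b).injective_subtype
    have he := exact_subtype_ker (R := R) b
    obtain rfl | hpos := Nat.eq_zero_or_pos i
    · obtain ⟨δ, hδ, hδe⟩ := ext_one hi he hb C
      obtain ⟨δ', hδ', hδe'⟩ := ext_one hi he hb (G ⊗[R] C)
      have h1 : EV R N (G ⊗[R] C) 1 ↔
          Function.Surjective ((LinearMap.ker b).subtype.lcomp R (G ⊗[R] C)) := by
        constructor
        · intro hv k
          exact (hδe' k).1 (@Subsingleton.elim _ hv _ _)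
        · intro hs
          refine subsingleton_of_forall_eq 0 fun x => ?_
          obtain ⟨k, rfl⟩ := hδ' x
          exact (hδe' k).2 (hs k)
      have hex := lTensor_exact G hδe hδ
      have h2 : Subsingleton (G ⊗[R] EX R N C 1) ↔
          Function.Surjective (((LinearMap.ker b).subtype.lcomp R C).lTensor G) := by
        constructor
        · intro hv k
          exact (hex k).1 (Subsingleton.elim _ _)
        · intro hs
          refine subsingleton_of_forall_eq 0 fun x => ?_
          obtain ⟨k, rfl⟩ := LinearMap.lTensor_surjective G hδ x
          exact (hex k).2 (hs k)
      change EV R N (G ⊗[R] C) 1 ↔ Subsingleton (G ⊗[R] EX R N C 1)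
      rw [h1, h2]
      have hP := hom_tensor_bijective_free (R := R) n G C
      have hK := hom_tensor_bijective (R := R) (LinearMap.ker b) G C
      have hcomm : ∀ x, lTensorHomToHomLTensor (.id R) (LinearMap.ker b) G C
          (((LinearMap.ker b).subtype.lcomp R C).lTensor G x) =
          (LinearMap.ker b).subtype.lcomp R (G ⊗[R] C)
            (lTensorHomToHomLTensor (.id R) (Fin n → R) G C x) := by
        intro x
        induction x using TensorProduct.induction_on with
        | zero => simp
        | tmul g f => ext; simp
        | add x y hx hy => simp only [map_add, hx, hy]
      constructor
      · intro hs x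
        obtain ⟨y, hy⟩ := hs (lTensorHomToHomLTensor (.id R) (LinearMap.ker b) G C x)
        obtain ⟨z, rfl⟩ := hP.2 y
        rw [← hcomm] at hy
        exact ⟨z, hK.1 hy⟩
      · intro hs x
        obtain ⟨y, rfl⟩ := hK.2 x
        obtain ⟨z, rfl⟩ := hs y
        exact ⟨_, (hcomm z).symm⟩
    · obtain ⟨e⟩ := ext_shift hi he hb C i hpos
      obtain ⟨e'⟩ := ext_shift hi he hb (G ⊗[R] C) i hpos
      rw [← (e.lTensor G).toEquiv.subsingleton_congr]
      exact (e'.toEquiv.subsingleton_congr).symm.trans (ih _)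

end
end PwDual

/-! ### Homomorphisms into injective modules -/

namespace PwDual
open TensorProduct
section
variable {R : Type u} [CommRing R]

/-- A map into an injective module factors through `g` as soon as it vanishes on `ker g`. -/
lemma inj_factor {A B E : Type u} [AddCommGroup A] [Module R A] [AddCommGroup B] [Module R B]
    [AddCommGroup E] [Module R E] [Module.Injective R E] (g : A →ₗ[R] B) (k : A →ₗ[R] E)
    (h : LinearMap.ker g ≤ LinearMap.ker k) : ∃ l : B →ₗ[R] E, l ∘ₗ g = k := by
  obtain ⟨l, hl⟩ := Module.Injective.out ((LinearMap.ker g).liftQ g le_rfl)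
    (LinearMap.ker_eq_bot.1 (Submodule.ker_liftQ_eq_bot _ _ _ le_rfl))
    ((LinearMap.ker g).liftQ k h)
  exact ⟨l, LinearMap.ext fun x => hl ((LinearMap.ker g).mkQ x)⟩

lemma inj_lcomp_surjective {A B E : Type u} [AddCommGroup A] [Module R A] [AddCommGroup B]
    [Module R B] [AddCommGroup E] [Module R E] [Module.Injective R E] {g : A →ₗ[R] B}
    (h : Function.Injective g) : Function.Surjective (g.lcomp R E) := fun k => by
  obtain ⟨l, hl⟩ := inj_factor g k (by rw [LinearMap.ker_eq_bot.2 h]; exact bot_le)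
  exact ⟨l, hl⟩

lemma inj_lcomp_exact {A B D E : Type u} [AddCommGroup A] [Module R A] [AddCommGroup B]
    [Module R B] [AddCommGroup D] [Module R D] [AddCommGroup E] [Module R E]
    [Module.Injective R E] {f : A →ₗ[R] B} {g : B →ₗ[R] D} (h : Function.Exact f g) :
    Function.Exact (g.lcomp R E) (f.lcomp R E) := by
  intro k
  constructor
  · intro hk
    obtain ⟨l, hl⟩ := inj_factor g k (by
      intro x hx
      obtain ⟨y, rfl⟩ := (h x).1 hx
      exact congrArg (fun t => t y) hk)
    exact ⟨l, hl⟩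
  · rintro ⟨l, rfl⟩
    ext x
    simp [h.apply_apply_eq_zero]

/-- Finitely generated modules over a noetherian ring are finitely presented. -/
lemma exists_pres₂ [IsNoetherianRing R] (N : Type u) [AddCommGroup N] [Module R N]
    [Module.Finite R N] : ∃ (m n : ℕ) (a : (Fin m → R) →ₗ[R] (Fin n → R))
      (b : (Fin n → R) →ₗ[R] N), Function.Exact a b ∧ Function.Surjective b := by
  obtain ⟨n, b, hb, _⟩ := exists_pres (R := R) N
  obtain ⟨m, a, ha, _⟩ := exists_pres (R := R) (LinearMap.ker b)
  refine ⟨m, n, (LinearMap.ker b).subtype ∘ₗ a, b, ?_, hb⟩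
  rw [LinearMap.exact_iff, LinearMap.range_comp, LinearMap.range_eq_top.2 ha]
  simp

/-- Over a noetherian ring, homomorphisms between injective modules form a flat module. The proof
verifies the equational criterion for flatness. -/
theorem flat_hom_injective [IsNoetherianRing R] (I E : Type u) [AddCommGroup I] [Module R I]
    [AddCommGroup E] [Module R E] [Module.Injective R I] [Module.Injective R E] :
    Module.Flat R (I →ₗ[R] E) := by
  refine Module.Flat.of_forall_isTrivialRelation fun {l f x} hx => ?_
  -- a finite generating family `a` of the syzygies of `f`
  let s : (Fin l → R) →ₗ[R] R := Fintype.linearCombination R f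
  have hs : ∀ v, s v = ∑ i, v i * f i := fun v => by
    simp [s, Fintype.linearCombination_apply]
  obtain ⟨m, a, ha, -⟩ := exists_pres (R := R) (LinearMap.ker s)
  let α (j : Fin m) (i : Fin l) : R := (a (Pi.single j 1)).1 i
  have hα : ∀ j, ∑ i, α j i * f i = 0 := fun j => by
    rw [← hs]; exact (a (Pi.single j 1)).2
  let B : (Fin l → I) →ₗ[R] (Fin m → I) :=
    LinearMap.pi fun j => ∑ i, α j i • LinearMap.proj i
  have hB : ∀ v j, B v j = ∑ i, α j i • v i := fun v j => by simp [B]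
  let X : (Fin l → I) →ₗ[R] E := ∑ i, x i ∘ₗ LinearMap.proj i
  have hX : ∀ v, X v = ∑ i, x i (v i) := fun v => by simp [X]
  -- the kernel of `B` consists of the families `(f i • w)`, because `I` is injective
  have hker : LinearMap.ker B ≤ LinearMap.ker X := by
    intro v hv
    let V : (Fin l → R) →ₗ[R] I := Fintype.linearCombination R v
    have hV : ∀ w, V w = ∑ i, w i • v i := fun w => by
      simp [V, Fintype.linearCombination_apply]
    obtain ⟨w, hw⟩ := inj_factor s V (by
      intro y hy
      obtain ⟨c, hc⟩ := ha ⟨y, hy⟩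
      have : y = ((LinearMap.ker s).subtype ∘ₗ a) c := by simp [hc]
      rw [LinearMap.mem_ker, this, ← LinearMap.comp_apply]
      have : V ∘ₗ ((LinearMap.ker s).subtype ∘ₗ a) = 0 := by
        refine (Pi.basisFun R (Fin m)).ext fun j => ?_
        have := congrFun (LinearMap.mem_ker.1 hv) j
        rw [hB] at this
        simpa [hV, α] using this
      rw [this]; rfl)
    have hvi : ∀ i, v i = f i • w 1 := fun i => by
      have := congrArg (fun t => t (Pi.single i 1)) hw
      simp only [LinearMap.comp_apply, hs, hV] at this
      rw [← map_smul]
      simpa [Pi.single_apply, eq_comm] using this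
    rw [LinearMap.mem_ker, hX]
    have := congrArg (fun t => t (w 1)) hx
    simpa [hvi] using this
  obtain ⟨z, hz⟩ := inj_factor B X hker
  refine ⟨m, fun i j => α j i, fun j => z ∘ₗ LinearMap.single R (fun _ => I) j,
    fun i => ?_, fun j => ?_⟩
  · ext u
    have h1 := congrArg (fun t => t (Pi.single i u)) hz
    have h2 : B (Pi.single i u) = ∑ j, α j i • LinearMap.single R (fun _ => I) j u := by
      ext j
      rw [hB]
      simp [Pi.single_apply, Finset.sum_apply]
    have h3 : X (Pi.single i u) = x i u := by
      rw [hX, Finset.sum_eq_single i]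
      · simp
      · intro j _ hj; simp [Pi.single_eq_of_ne hj]
      · simp
    simp only [LinearMap.comp_apply] at h1
    rw [h2, h3] at h1
    simp [← h1]
  · rw [← hα j]; exact Finset.sum_congr rfl fun i _ => mul_comm _ _

/-- The evaluation map `C ⊗ Hom(A, I) → Hom(Hom(C, A), I)`. -/
def theta (C A I : Type u) [AddCommGroup C] [Module R C] [AddCommGroup A] [Module R A]
    [AddCommGroup I] [Module R I] : C ⊗[R] (A →ₗ[R] I) →ₗ[R] ((C →ₗ[R] A) →ₗ[R] I) :=
  TensorProduct.lift (LinearMap.mk₂ R (fun c f => f ∘ₗ LinearMap.applyₗ c)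
    (fun c c' f => by ext; simp) (fun r c f => by ext; simp)
    (fun c f f' => by ext; simp) (fun r c f => by ext; simp))

@[simp] lemma theta_tmul (C A I : Type u) [AddCommGroup C] [Module R C] [AddCommGroup A]
    [Module R A] [AddCommGroup I] [Module R I] (c : C) (f : A →ₗ[R] I) (g : C →ₗ[R] A) :
    theta (R := R) C A I (c ⊗ₜ f) g = f (g c) := rfl

lemma theta_free (n : ℕ) (A I : Type u) [AddCommGroup A] [Module R A]
    [AddCommGroup I] [Module R I] : Function.Bijective (theta (R := R) (Fin n → R) A I) := by
  let j (i : Fin n) : A →ₗ[R] ((Fin n → R) →ₗ[R] A) := LinearMap.smulRightₗ (LinearMap.proj i)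
  have hj : ∀ i c x, j i c x = x i • c := fun i c x => rfl
  rw [Function.bijective_iff_has_inverse]
  refine ⟨fun φ => ∑ i, (Pi.single i 1 : Fin n → R) ⊗ₜ (φ ∘ₗ j i), fun x => ?_, fun φ => ?_⟩
  · induction x using TensorProduct.induction_on with
    | zero => simp
    | tmul c f =>
      have : ∀ i, theta (R := R) (Fin n → R) A I (c ⊗ₜ f) ∘ₗ j i = c i • f := fun i => by
        ext a; simp [hj]
      simp only [this, ← TensorProduct.smul_tmul]
      rw [← TensorProduct.sum_tmul]
      congr 1
      ext i
      simp [Finset.sum_apply, Pi.single_apply]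
    | add x y hx hy =>
      simp only [map_add, LinearMap.add_comp, TensorProduct.tmul_add, Finset.sum_add_distrib] at *
      rw [hx, hy]
  · ext g
    simp only [map_sum, LinearMap.sum_apply, theta_tmul, LinearMap.comp_apply]
    rw [← map_sum]
    congr 1
    refine (Pi.basisFun R (Fin n)).ext fun i => ?_
    simp [hj, LinearMap.sum_apply, Pi.single_apply]

lemma rtensor_comm_theta {C C' A I : Type u} [AddCommGroup C] [Module R C] [AddCommGroup C']
    [Module R C'] [AddCommGroup A] [Module R A] [AddCommGroup I] [Module R I] (a : C →ₗ[R] C')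
    (x : C ⊗[R] (A →ₗ[R] I)) :
    theta (R := R) C' A I (a.rTensor _ x) = (a.lcomp R A).lcomp R I (theta C A I x) := by
  induction x using TensorProduct.induction_on with
  | zero => simp
  | tmul c f => ext; simp
  | add x y hx hy => simp only [map_add, hx, hy]

/-- Tensor evaluation is bijective for `C` finitely generated and `I` injective: both sides are
right exact in `C`, and the case of a free module is `theta_free`. -/
theorem theta_bijective [IsNoetherianRing R] (C A I : Type u) [AddCommGroup C] [Module R C]
    [Module.Finite R C] [AddCommGroup A] [Module R A] [AddCommGroup I] [Module R I]
    [Module.Injective R I] : Function.Bijective (theta (R := R) C A I) := by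
  obtain ⟨m, n, a, b, hab, hb⟩ := exists_pres₂ (R := R) C
  exact bij_right (f₁ := a.rTensor (A →ₗ[R] I)) (f₂ := b.rTensor (A →ₗ[R] I))
    (g₁ := (a.lcomp R A).lcomp R I) (g₂ := (b.lcomp R A).lcomp R I)
    (i₁ := theta _ A I) (i₂ := theta _ A I)
    (LinearMap.rTensor_surjective _ hb) (rTensor_exact _ hab hb)
    (inj_lcomp_surjective (lcomp_injective A hb)) (inj_lcomp_exact (lcomp_exact A hb hab))
    (rtensor_comm_theta a) (rtensor_comm_theta b) (theta_free n A I) (theta_free m A I).2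

/-- A finitely generated faithful module over a noetherian ring detects zero modules
under the tensor product. -/
theorem subsingleton_of_tensor [IsNoetherianRing R] (C Y : Type u) [AddCommGroup C] [Module R C]
    [Module.Finite R C] (hC : ∀ r ∈ Module.annihilator R C, r = 0) [AddCommGroup Y] [Module R Y]
    (h : Subsingleton (C ⊗[R] Y)) : Subsingleton Y := by
  obtain ⟨E, _, _, _, hE⟩ := exists_injective_cogenerator R
  refine subsingleton_of_forall_eq 0 fun y => by_contra fun hy => ?_
  obtain ⟨l, hl⟩ := hE Y y hy
  apply hl
  let L : Submodule R (Y →ₗ[R] E) := Submodule.span R {l}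
  have hL : Subsingleton (C →ₗ[R] L) := by
    refine subsingleton_of_forall_eq 0 fun k => ?_
    have h0 : TensorProduct.lift (L.subtype ∘ₗ k) = 0 := LinearMap.ext fun x => by
      rw [@Subsingleton.elim _ h x 0]; simp
    ext c y
    have := congrArg (fun t => t (c ⊗ₜ y)) h0
    simpa using this
  obtain ⟨r, hr, hr'⟩ := IsSMulRegular.subsingleton_linearMap_iff.1 hL
  rw [hC r hr] at hr'
  have h1 : (⟨l, Submodule.mem_span_singleton_self l⟩ : L) = 0 := hr' (by simp)
  have h2 : l = 0 := congrArg Subtype.val h1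
  rw [h2]; rfl

end
end PwDual

/-! ### Auslander and Bass classes -/

namespace PwDual
open TensorProduct
section
variable {R : Type u} [CommRing R]

/-- Vanishing of `Ext` in positive degrees characterizes injectivity. -/
lemma injective_of_EV {B : Type u} [AddCommGroup B] [Module R B]
    (h : ∀ (N : Type u) [AddCommGroup N] [Module R N] (i : ℕ), 0 < i → EV R N B i) :
    Module.Injective R B := by
  rw [← Module.Baer.iff_injective]
  intro I g
  obtain ⟨l, hl⟩ := (h (R ⧸ I) 1 one_pos).extend (f := Submodule.subtype I) (g := I.mkQ)
    I.injective_subtype (by rw [LinearMap.exact_iff]; simp) I.mkQ_surjective g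
  exact ⟨l, fun x hx => by simpa using congrArg (fun k => k ⟨x, hx⟩) hl⟩

section llcomp
variable {A B D X : Type u} [AddCommGroup A] [Module R A] [AddCommGroup B]
    [Module R B] [AddCommGroup D] [Module R D] [AddCommGroup X] [Module R X]
    {f : A →ₗ[R] B} {g : B →ₗ[R] D}

lemma compRight_injective (hf : Function.Injective f) :
    Function.Injective (f.compRight R : (X →ₗ[R] A) →ₗ[R] (X →ₗ[R] B)) := fun _ _ h =>
  LinearMap.ext fun x => hf (congrArg (fun t => t x) h)

lemma compRight_exact (hf : Function.Injective f) (h : Function.Exact f g) :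
    Function.Exact (f.compRight R : (X →ₗ[R] A) →ₗ[R] (X →ₗ[R] B)) (g.compRight R) := by
  intro k
  constructor
  · intro hk
    have : ∀ x, k x ∈ LinearMap.range f := fun x => (h _).1 (congrArg (fun t => t x) hk)
    refine ⟨(LinearEquiv.ofInjective f hf).symm ∘ₗ k.codRestrict _ this, ?_⟩
    ext x
    change f ((LinearEquiv.ofInjective f hf).symm (k.codRestrict _ this x)) = k x
    have h2 : ∀ y, f ((LinearEquiv.ofInjective f hf).symm y) = y.1 := fun y => by
      obtain ⟨y, rfl⟩ := (LinearEquiv.ofInjective f hf).surjective y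
      simp
    rw [h2]; rfl
  · rintro ⟨l, rfl⟩
    ext x
    exact h.apply_apply_eq_zero _

end llcomp

section flat
variable {K P F : Type u} [AddCommGroup K] [Module R K] [AddCommGroup P]
    [Module R P] [AddCommGroup F] [Module R F] {f : K →ₗ[R] P} {g : P →ₗ[R] F}

/-- The kernel of a surjection between flat modules is flat. -/
lemma flat_ker [Module.Flat R P] [Module.Flat R F] (hf : Function.Injective f)
    (h : Function.Exact f g) (hg : Function.Surjective g) : Module.Flat R K := by
  rw [Module.Flat.iff_rTensor_injective']
  intro J
  have h1 := LinearMap.lTensor_injective_of_exact_of_flat g hg f hf h J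
  have h2 : Function.Injective (J.subtype.rTensor P) :=
    Module.Flat.rTensor_preserves_injective_linearMap _ J.injective_subtype
  have h3 := h2.comp h1
  rw [← LinearMap.coe_comp, LinearMap.rTensor_comp_lTensor, ← LinearMap.lTensor_comp_rTensor,
    LinearMap.coe_comp] at h3
  exact h3.of_comp

end flat

lemma exists_free_cover (F : Type u) [AddCommGroup F] [Module R F] :
    ∃ (P : Type u) (_ : AddCommGroup P) (_ : Module R P) (g : P →ₗ[R] F),
      Module.Free R P ∧ Function.Surjective g :=
  ⟨F →₀ R, inferInstance, inferInstance, Finsupp.linearCombination R id, inferInstance,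
    Finsupp.linearCombination_id_surjective R F⟩

lemma injective_hom_flat (F I : Type u) [AddCommGroup F] [Module R F] [AddCommGroup I] [Module R I]
    [Module.Flat R F] [Module.Injective R I] : Module.Injective R (F →ₗ[R] I) := by
  refine ⟨fun X Y _ _ _ _ f hf g => ?_⟩
  obtain ⟨l, hl⟩ := Module.Injective.out (f.rTensor F)
    (Module.Flat.rTensor_preserves_injective_linearMap f hf) (TensorProduct.lift g)
  refine ⟨TensorProduct.curry l, fun x => LinearMap.ext fun y => ?_⟩
  simpa using hl (x ⊗ₜ y)

/-- Over any ring, `Hom(C, I)` is cotorsion when `I` is injective. -/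
lemma EV_flat_hom_injective (F C I : Type u) [AddCommGroup F] [Module R F] [AddCommGroup C]
    [Module R C] [AddCommGroup I] [Module R I] [Module.Flat R F] [Module.Injective R I] :
    EV R F (C →ₗ[R] I) 1 := by
  obtain ⟨P, _, _, g, _, hg⟩ := exists_free_cover (R := R) F
  refine EV_one_of_extend (LinearMap.ker g).injective_subtype (exact_subtype_ker g) hg
    (EV.of_projective one_pos) fun k => ?_
  obtain ⟨l, hl⟩ := Module.Injective.out ((LinearMap.ker g).subtype.lTensor C)
    (LinearMap.lTensor_injective_of_exact_of_flat g hg _ (LinearMap.ker g).injective_subtype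
      (exact_subtype_ker g) C) (TensorProduct.lift k.flip)
  refine ⟨(TensorProduct.curry l).flip, LinearMap.ext fun x => LinearMap.ext fun y => ?_⟩
  simpa using hl (y ⊗ₜ x)

/-- A cotorsion module also has no `Ext^2` from flat modules: the syzygy of a flat module is flat. -/
lemma EV_flat_two {M : Type u} [AddCommGroup M] [Module R M]
    (hM : ∀ (F : Type u) [AddCommGroup F] [Module R F], Module.Flat R F → EV R F M 1)
    (F : Type u) [AddCommGroup F] [Module R F] [Module.Flat R F] : EV R F M 2 := by
  obtain ⟨P, _, _, g, _, hg⟩ := exists_free_cover (R := R) F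
  exact EV.contra₃ (LinearMap.ker g).injective_subtype (exact_subtype_ker g) hg
    (hM _ (flat_ker (LinearMap.ker g).injective_subtype (exact_subtype_ker g) hg))
    (EV.of_projective (by norm_num))

/-- The hypotheses on a semidualizing module, with `Ext` expressed through `EV`. -/
structure SD (R : Type u) [CommRing R] (C : Type u) [AddCommGroup C] [Module R C] : Prop where
  fin : Module.Finite R C
  hom : Function.Bijective (fun r : R => r • (LinearMap.id : C →ₗ[R] C))
  ext : ∀ i : ℕ, 0 < i → EV R C C i

lemma isSemidualizing_iff {C : Type u} [AddCommGroup C] [Module R C] :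
    IsSemidualizing R C ↔ SD R C :=
  ⟨fun h => ⟨h.1, h.2.1, fun i hi => (extM_subsingleton_iff hi).1 (h.2.2 i hi)⟩,
    fun h => ⟨h.1, h.2, fun i hi => (extM_subsingleton_iff hi).2 (h.3 i hi)⟩⟩

variable {C : Type u} [AddCommGroup C] [Module R C]

lemma SD.ann (hC : SD R C) : ∀ r ∈ Module.annihilator R C, r = 0 := fun r hr => by
  apply hC.hom.1
  ext c
  simpa using Module.mem_annihilator.1 hr c

variable [IsNoetherianRing R]

section E
variable {E : Type u} [AddCommGroup E] [Module R E] [Module.Injective R E]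

/-- For `I` and `E` injective, `Hom(Hom(C, I), E) ≅ Hom(I, E) ⊗ C` with `Hom(I, E)` flat. -/
lemma EV_dual_base (hfin : Module.Finite R C) (X I : Type u) [AddCommGroup X] [Module R X]
    [Module.Finite R X] [AddCommGroup I] [Module R I] [Module.Injective R I] {i : ℕ}
    (h : EV R X C i) : EV R X ((C →ₗ[R] I) →ₗ[R] E) i := by
  have := flat_hom_injective (R := R) I E
  have h1 : EV R X ((I →ₗ[R] E) ⊗[R] C) i := by
    rw [EV_tensor_iff]
    have : Subsingleton (EX R X C i) := h
    infer_instance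
  exact h1.of_equiv (.refl R X) (TensorProduct.comm R _ _ ≪≫ₗ
    LinearEquiv.ofBijective _ (theta_bijective (R := R) C I E))

omit [IsNoetherianRing R] in
/-- If `Ext^1(C, Hom(Y₃, E)) = 0` for an injective cogenerator `E`, then `C ⊗ -` preserves
injectivity of `f`: the hypothesis is dual to `Tor_1(C, Y₃) = 0`. -/
lemma lTensor_injective_of_EV (hE : ∀ (Y : Type u) [AddCommGroup Y] [Module R Y] (y : Y),
        y ≠ 0 → ∃ f : Y →ₗ[R] E, f y ≠ 0)
    {Y₁ Y₂ Y₃ : Type u} [AddCommGroup Y₁] [Module R Y₁] [AddCommGroup Y₂] [Module R Y₂]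
    [AddCommGroup Y₃] [Module R Y₃] {f : Y₁ →ₗ[R] Y₂} {g : Y₂ →ₗ[R] Y₃}
    (hf : Function.Injective f) (h : Function.Exact f g) (hg : Function.Surjective g)
    (hv : EV R C (Y₃ →ₗ[R] E) 1) : Function.Injective (f.lTensor C) := by
  rw [injective_iff_map_eq_zero]
  intro z hz
  by_contra hne
  obtain ⟨l, hl⟩ := hE _ z hne
  obtain ⟨L, hL⟩ := EV.lift (lcomp_injective E hg) (lcomp_exact E hg h)
    (inj_lcomp_surjective hf) hv (TensorProduct.curry l)
  have : TensorProduct.lift L ∘ₗ f.lTensor C = l := by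
    ext c y
    have := congrArg (fun t => t c y) hL
    simpa using this
  apply hl
  rw [← this, LinearMap.comp_apply, hz, map_zero]

omit [IsNoetherianRing R] in
/-- The evaluation `C ⊗ Hom(C, B) → B`. -/
def ev (R : Type u) [CommRing R] (C B : Type u) [AddCommGroup C] [Module R C] [AddCommGroup B]
    [Module R B] : C ⊗[R] (C →ₗ[R] B) →ₗ[R] B :=
  TensorProduct.lift (LinearMap.applyₗ)

omit [IsNoetherianRing R] in
@[simp] lemma ev_tmul (B : Type u) [AddCommGroup B] [Module R B] (c : C) (f : C →ₗ[R] B) :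
    ev R C B (c ⊗ₜ f) = f c := rfl

/-- Evaluation at an injective `I` is tensor evaluation followed by
`Hom(Hom(C, C), I) ≅ Hom(R, I) ≅ I`. -/
lemma ev_bijective_of_injective (hC : SD R C) (I : Type u) [AddCommGroup I] [Module R I]
    [Module.Injective R I] : Function.Bijective (ev R C I) := by
  have := hC.fin
  let hom : R ≃ₗ[R] (C →ₗ[R] C) := LinearEquiv.ofBijective (LinearMap.toSpanSingleton R _ LinearMap.id) hC.hom
  let e : C ⊗[R] (C →ₗ[R] I) ≃ₗ[R] I :=
    LinearEquiv.ofBijective _ (theta_bijective (R := R) C C I) ≪≫ₗ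
      (hom.congrLeft I R).symm ≪≫ₗ LinearMap.ringLmapEquivSelf R R I
  have : ev R C I = e.toLinearMap := by
    ext c f
    simp only [e]
    change f c = f ((1 : R) • c)
    rw [one_smul]
  rw [this]
  exact e.bijective

omit [IsNoetherianRing R] in
lemma ev_natural {A B : Type u} [AddCommGroup A] [Module R A] [AddCommGroup B]
    [Module R B] (f : A →ₗ[R] B) (x) :
    ev R C B ((f.compRight R : (C →ₗ[R] A) →ₗ[R] _).lTensor C x) = f (ev R C A x) := by
  induction x using TensorProduct.induction_on with
  | zero => simp
  | tmul c g => simp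
  | add x y hx hy => simp only [map_add, hx, hy]

variable (hE : ∀ (Y : Type u) [AddCommGroup Y] [Module R Y] (y : Y),
        y ≠ 0 → ∃ f : Y →ₗ[R] E, f y ≠ 0)
include hE

omit [Module.Injective R E] hE in
/-- A cokernel argument: if evaluation is bijective at `B₁`, then `Hom(C, -)` preserves
surjections from an injective module onto `B₁`. -/
lemma compRight_surjective (hC : SD R C) {I B₁ : Type u} [AddCommGroup I] [Module R I]
    [Module.Injective R I] [AddCommGroup B₁] [Module R B₁] {g : I →ₗ[R] B₁}
    (hg : Function.Surjective g) (h : Function.Bijective (ev R C B₁)) :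
    Function.Surjective (g.compRight R : (C →ₗ[R] I) →ₗ[R] (C →ₗ[R] B₁)) := by
  have := hC.fin
  let k : (C →ₗ[R] I) →ₗ[R] (C →ₗ[R] B₁) := g.compRight R
  have hk : Function.Surjective (k.lTensor C) := by
    intro x
    obtain ⟨y, hy⟩ := hg (ev R C B₁ x)
    obtain ⟨z, rfl⟩ := (ev_bijective_of_injective hC I).2 y
    exact ⟨z, h.1 (by rw [← hy, ev_natural])⟩
  have hsub : Subsingleton (C ⊗[R] ((C →ₗ[R] B₁) ⧸ LinearMap.range k)) := by
    refine subsingleton_of_forall_eq 0 fun x => ?_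
    obtain ⟨x, rfl⟩ := LinearMap.lTensor_surjective C (Submodule.mkQ_surjective _) x
    obtain ⟨x, rfl⟩ := hk x
    rw [← LinearMap.comp_apply, ← LinearMap.lTensor_comp,
      (exact_mkQ_range k).linearMap_comp_eq_zero]; simp
  have := subsingleton_of_tensor C _ hC.ann hsub
  exact LinearMap.range_eq_top.1 (Submodule.Quotient.subsingleton_iff.1 this)

/-- Modules of finite injective dimension lie in the Bass class of `C`. The second conclusion is
dual to `Tor_i(C, Hom(C, B)) = 0`. -/
theorem bass (hC : SD R C) (n : ℕ) : ∀ (B : Type u) [AddCommGroup B] [Module R B],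
    (∀ (N : Type u) [AddCommGroup N] [Module R N] (i : ℕ), n < i → EV R N B i) →
    Function.Bijective (ev R C B) ∧ ∀ i, 0 < i → EV R C ((C →ₗ[R] B) →ₗ[R] E) i := by
  have hfin := hC.fin
  induction n with
  | zero =>
    intro B _ _ hB
    have := injective_of_EV hB
    exact ⟨ev_bijective_of_injective hC B, fun i hi => EV_dual_base hfin C B (hC.ext i hi)⟩
  | succ n ih =>
    intro B _ _ hB
    obtain ⟨I, _, _, f, hI, hf⟩ := exists_injective_embedding (R := R) B
    obtain ⟨B₁, _, _, g, hg, hfg⟩ : ∃ (B₁ : Type u) (_ : AddCommGroup B₁) (_ : Module R B₁)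
        (g : I →ₗ[R] B₁), Function.Surjective g ∧ Function.Exact f g :=
      ⟨_, _, _, _, Submodule.mkQ_surjective _, exact_mkQ_range f⟩
    obtain ⟨h1, h2⟩ := ih B₁ fun N _ _ i hi =>
      EV.cov₃ hf hfg hg (EV.of_injective (by omega)) (hB N (i + 1) (by omega))
    have hi := compRight_injective (X := C) hf
    have he := compRight_exact (X := C) hf hfg
    have hs := compRight_surjective hC hg h1
    refine ⟨?_, fun i hi' => ?_⟩
    · exact bij_left (lTensor_injective_of_EV hE hi he hs (h2 1 one_pos))
        (lTensor_exact C he hs) hf hfg (ev_natural f) (ev_natural g)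
        (ev_bijective_of_injective hC I) h1.1
    · exact EV.cov₃ (lcomp_injective E hs) (lcomp_exact E hs he) (inj_lcomp_surjective hi)
        (EV_dual_base hfin C I (hC.ext i hi')) (h2 (i + 1) (by omega))

omit hE in
/-- The unit `M → Hom(C, C ⊗ M)`. -/
def unit (R : Type u) [CommRing R] (C M : Type u) [AddCommGroup C] [Module R C] [AddCommGroup M]
    [Module R M] : M →ₗ[R] (C →ₗ[R] C ⊗[R] M) := (TensorProduct.mk R C M).flip

/-- If `C ⊗ M` has finite injective dimension then `M ≅ Hom(C, C ⊗ M)`, as for modules in the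
Auslander class of `C`. -/
theorem unit_bijective (hC : SD R C) (M : Type u) [AddCommGroup M] [Module R M] (n : ℕ)
    (hB : ∀ (N : Type u) [AddCommGroup N] [Module R N] (i : ℕ), n < i → EV R N (C ⊗[R] M) i) :
    Function.Bijective (unit R C M) := by
  have hfin := hC.fin
  obtain ⟨h1, h2⟩ := bass hE hC n (C ⊗[R] M) hB
  have hcomp : ev R C (C ⊗[R] M) ∘ₗ (unit R C M).lTensor C = LinearMap.id := by
    ext c m; simp [unit]
  have hc : ∀ x, ev R C (C ⊗[R] M) ((unit R C M).lTensor C x) = x := fun x =>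
    congrArg (fun t => t x) hcomp
  have hinj : Function.Injective ((unit R C M).lTensor C) := fun x y hxy => by
    rw [← hc x, hxy, hc]
  have hsurj : Function.Surjective ((unit R C M).lTensor C) := fun x =>
    ⟨ev R C _ x, h1.1 (hc _)⟩
  have hsub : Subsingleton (C ⊗[R] ((C →ₗ[R] C ⊗[R] M) ⧸ LinearMap.range (unit R C M))) := by
    refine subsingleton_of_forall_eq 0 fun x => ?_
    obtain ⟨x, rfl⟩ := LinearMap.lTensor_surjective C (Submodule.mkQ_surjective _) x
    obtain ⟨x, rfl⟩ := hsurj x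
    rw [← LinearMap.comp_apply, ← LinearMap.lTensor_comp,
      (exact_mkQ_range (unit R C M)).linearMap_comp_eq_zero]; simp
  have := subsingleton_of_tensor C _ hC.ann hsub
  have hu : Function.Surjective (unit R C M) :=
    LinearMap.range_eq_top.1 (Submodule.Quotient.subsingleton_iff.1 this)
  refine ⟨?_, hu⟩
  have hK := lTensor_injective_of_EV hE (LinearMap.ker (unit R C M)).injective_subtype
    (exact_subtype_ker _) hu (h2 1 one_pos)
  have hsub' : Subsingleton (C ⊗[R] LinearMap.ker (unit R C M)) := by
    refine subsingleton_of_forall_eq 0 fun x => hK (hinj ?_)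
    rw [← LinearMap.comp_apply, ← LinearMap.lTensor_comp,
      (exact_subtype_ker (unit R C M)).linearMap_comp_eq_zero]; simp
  have := subsingleton_of_tensor C _ hC.ann hsub'
  rw [← LinearMap.ker_eq_bot]
  exact Submodule.subsingleton_iff_eq_bot.1 this

omit [IsNoetherianRing R] [Module.Injective R E] hE in
lemma EV_flat_cov {F X Y Z : Type u} [AddCommGroup F] [Module R F] [AddCommGroup X] [Module R X]
    [AddCommGroup Y] [Module R Y] [AddCommGroup Z] [Module R Z] {f : X →ₗ[R] Y} {g : Y →ₗ[R] Z}
    (hf : Function.Injective f) (h : Function.Exact f g) (hg : Function.Surjective g)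
    (hv : EV R F X 1) :
    Function.Surjective (g.compRight R : (F →ₗ[R] Y) →ₗ[R] (F →ₗ[R] Z)) :=
  fun k => hv.lift hf h hg k

/-- Vanishing of the `Ext` dual to `Tor_i(X, Hom(F, Hom(C, B)))`, when `Hom(C, B)` is cotorsion and
`B` has injective dimension at most `n`. The proof shifts dimension along `0 → B → I → B₁ → 0`;
cotorsion of `Hom(C, B)` keeps `Hom(F, Hom(C, -))` exact and is inherited by `Hom(C, B₁)`. -/
theorem EV_dual_hom (hC : SD R C) (X F : Type u) [AddCommGroup X] [Module R X] [Module.Finite R X]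
    [AddCommGroup F] [Module R F] [Module.Flat R F] (N : ℕ)
    (hX : ∀ i, i ≤ N → EV R X C i) (n : ℕ) : ∀ (B : Type u) [AddCommGroup B] [Module R B],
    (∀ (N : Type u) [AddCommGroup N] [Module R N] (i : ℕ), n < i → EV R N B i) →
    (∀ (F : Type u) [AddCommGroup F] [Module R F], Module.Flat R F → EV R F (C →ₗ[R] B) 1) →
    ∀ i, i + n ≤ N → EV R X ((F →ₗ[R] (C →ₗ[R] B)) →ₗ[R] E) i := by
  have hfin := hC.fin
  have base : ∀ (I : Type u) [AddCommGroup I] [Module R I] [Module.Injective R I] (i : ℕ),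
      i ≤ N → EV R X ((F →ₗ[R] (C →ₗ[R] I)) →ₗ[R] E) i := by
    intro I _ _ _ i hi
    have := injective_hom_flat (R := R) F I
    let e : (C →ₗ[R] (F →ₗ[R] I)) ≃ₗ[R] (F →ₗ[R] (C →ₗ[R] I)) := LinearMap.lflip
    exact (EV_dual_base (E := E) hfin X (F →ₗ[R] I) (hX i hi)).of_equiv (.refl R X)
      (e.congrLeft E R)
  induction n with
  | zero =>
    intro B _ _ hB _ i hi
    have := injective_of_EV hB
    exact base B i hi
  | succ n ih =>
    intro B _ _ hB hcot i hi
    obtain ⟨I, _, _, f, hI, hf⟩ := exists_injective_embedding (R := R) B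
    obtain ⟨B₁, _, _, g, hg, hfg⟩ : ∃ (B₁ : Type u) (_ : AddCommGroup B₁) (_ : Module R B₁)
        (g : I →ₗ[R] B₁), Function.Surjective g ∧ Function.Exact f g :=
      ⟨_, _, _, _, Submodule.mkQ_surjective _, exact_mkQ_range f⟩
    have hB₁ : ∀ (N : Type u) [AddCommGroup N] [Module R N] (i : ℕ), n < i → EV R N B₁ i :=
      fun N _ _ i hi =>
        EV.cov₃ hf hfg hg (EV.of_injective (by omega)) (hB N (i + 1) (by omega))
    have hi' := compRight_injective (X := C) hf
    have he := compRight_exact (X := C) hf hfg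
    have hs := compRight_surjective hC hg (bass hE hC n B₁ hB₁).1
    have h1 := ih B₁ hB₁ (fun G _ _ hG => EV.cov₃ hi' he hs
      (EV_flat_hom_injective G C I) (EV_flat_two hcot G)) (i + 1) (by omega)
    have hi'' := compRight_injective (X := F) hi'
    have he' := compRight_exact (X := F) hi' he
    have hs' := EV_flat_cov (F := F) hi' he hs (hcot F inferInstance)
    exact EV.cov₃ (lcomp_injective E hs') (lcomp_exact E hs' he') (inj_lcomp_surjective hi'')
        (base I i (by omega)) h1

/-- Key consequence: `X ⊗ Hom(F, M) = 0` when `C ⊗ M` has injective dimension at most `n` and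
`Ext^i(X, C) = 0` for `i ≤ n`. -/
theorem tensor_hom_vanish (hC : SD R C) (X F M : Type u) [AddCommGroup X] [Module R X]
    [Module.Finite R X] [AddCommGroup F] [Module R F] [Module.Flat R F]
    [AddCommGroup M] [Module R M] (n : ℕ)
    (hX : ∀ i, i ≤ n → EV R X C i)
    (hB : ∀ (N : Type u) [AddCommGroup N] [Module R N] (i : ℕ), n < i → EV R N (C ⊗[R] M) i)
    (hM : ∀ (F : Type u) [AddCommGroup F] [Module R F], Module.Flat R F → EV R F M 1) :
    Subsingleton (X ⊗[R] (F →ₗ[R] M)) := by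
  let e := LinearEquiv.ofBijective _ (unit_bijective hE hC M n hB)
  have h := EV_dual_hom (E := E) hE hC X F n hX n (C ⊗[R] M) hB
    (fun G _ _ hG => (hM G hG).of_equiv (.refl R G) e) 0 (by omega)
  have h' := h.of_equiv (.refl R X) (e.symm.congrRight.congrLeft E R)
  rw [EV_zero_iff] at h'
  refine subsingleton_of_forall_eq 0 fun x => by_contra fun hx => ?_
  obtain ⟨l, hl⟩ := hE _ x hx
  apply hl
  have : l = 0 := TensorProduct.ext' fun a b =>
    congrArg (fun t => t a b) (Subsingleton.elim (TensorProduct.curry l) 0)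
  rw [this, LinearMap.zero_apply]

end E
end
end PwDual

/-! ### The inequality for flat covers -/

namespace PwDual
open TensorProduct
section
variable {R : Type u} [CommRing R]

lemma smul_top_of_tensor {𝔞 : Ideal R} {Y : Type u} [AddCommGroup Y] [Module R Y]
    (h : Subsingleton ((R ⧸ 𝔞) ⊗[R] Y)) : (𝔞 • ⊤ : Submodule R Y) = ⊤ := by
  rw [← Submodule.Quotient.subsingleton_iff]
  exact (quotTensorEquivQuotSMul Y 𝔞).symm.toEquiv.subsingleton_congr.2 h

lemma tensor_subsingleton_of_smul_top {F X : Type u} [AddCommGroup F] [Module R F]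
    [AddCommGroup X] [Module R X] (h : (Module.annihilator R X • ⊤ : Submodule R F) = ⊤) :
    Subsingleton (F ⊗[R] X) := by
  refine subsingleton_of_forall_eq 0 fun z => ?_
  induction z using TensorProduct.induction_on with
  | zero => rfl
  | add x y hx hy => rw [hx, hy, add_zero]
  | tmul f x =>
    have hf : f ∈ (Module.annihilator R X • ⊤ : Submodule R F) := by rw [h]; trivial
    induction hf using Submodule.smul_induction_on' with
    | smul a ha y _ => rw [TensorProduct.smul_tmul, Module.mem_annihilator.1 ha, tmul_zero]
    | add a _ b _ ha hb => rw [add_tmul, ha, hb, add_zero]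

/-- If `φ ∈ 𝔞 Hom(F, M)` for a flat cover `φ : F → M`, then `F = 𝔞 F`. -/
lemma cover_smul_top {M F : Type u} [AddCommGroup M] [Module R M] [AddCommGroup F] [Module R F]
    {φ : F →ₗ[R] M} (hφ : IsFlatCover R M F φ) (𝔞 : Ideal R)
    (h : φ ∈ (𝔞 • ⊤ : Submodule R (F →ₗ[R] M))) : (𝔞 • ⊤ : Submodule R F) = ⊤ := by
  have key : ∃ σ : F →ₗ[R] F, (∀ x, σ x ∈ (𝔞 • ⊤ : Submodule R F)) ∧ φ ∘ₗ σ = φ := by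
    suffices ∀ k ∈ (𝔞 • ⊤ : Submodule R (F →ₗ[R] M)),
        ∃ σ : F →ₗ[R] F, (∀ x, σ x ∈ (𝔞 • ⊤ : Submodule R F)) ∧ φ ∘ₗ σ = k from this φ h
    intro k hk
    induction hk using Submodule.smul_induction_on' with
    | smul a ha k _ =>
      obtain ⟨ψ, hψ⟩ := hφ.2.1 F _ _ hφ.1 k
      exact ⟨a • ψ, fun x => Submodule.smul_mem_smul ha Submodule.mem_top, by
        rw [LinearMap.comp_smul, hψ]⟩
    | add a _ b _ ha hb =>
      obtain ⟨σ, hσ, rfl⟩ := ha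
      obtain ⟨τ, hτ, rfl⟩ := hb
      exact ⟨σ + τ, fun x => Submodule.add_mem _ (hσ x) (hτ x), LinearMap.comp_add _ _ _⟩
  obtain ⟨σ, hσ, h2⟩ := key
  rw [eq_top_iff]
  intro x _
  obtain ⟨y, rfl⟩ := (hφ.2.2 σ h2).2 x
  exact hσ y

/-- Part (i), given that `Ext^i(R ⧸ 𝔞, C) = 0` for `i < j` whenever
`𝔞` is the annihilator of some `Ext^j(N, C)`. -/
theorem part_one [IsNoetherianRing R] {C : Type u} [AddCommGroup C] [Module R C] (hC : SD R C)
    (GR : ∀ (N : Type u) [AddCommGroup N] [Module R N] [Module.Finite R N] (j : ℕ), 0 < j →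
      ∀ i < j, EV R (R ⧸ Module.annihilator R (EX R N C j)) C i)
    {M F : Type u} [AddCommGroup M] [Module R M] [AddCommGroup F] [Module R F]
    {φ : F →ₗ[R] M} (hM : IsCotorsion R M) (hφ : IsFlatCover R M F φ) :
    injDim R (C ⊗[R] F) ≤ injDim R (C ⊗[R] M) := by
  cases hn : injDim R (C ⊗[R] M) with
  | top => exact le_top
  | coe n =>
    have hB := injDim_le_iff.1 hn.le
    obtain ⟨E, _, _, _, hE⟩ := exists_injective_cogenerator R
    have := hφ.1
    refine injDim_le_iff.2 fun N _ _ i hi => EV_of_ideals n _ (fun I => ?_) N i hi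
    refine EV.of_equiv (.refl R _) (TensorProduct.comm R F C) ?_
    rw [EV_tensor_iff]
    refine tensor_subsingleton_of_smul_top (cover_smul_top hφ _ ?_)
    rw [smul_top_of_tensor (tensor_hom_vanish hE hC _ F M n (fun i hi => GR (R ⧸ I) (n + 1)
      (by omega) i (by omega)) (fun N _ _ i hi => hB N _ _ i hi)
      (fun F _ _ hF => (extM_subsingleton_iff one_pos).1 (hM F _ _ hF)))]
    trivial

end
end PwDual

/-! ### Flat base change and localization -/

namespace PwDual
open TensorProduct
section
variable {R : Type u} [CommRing R]

section basechange
variable (S : Type u) [CommRing S] [Algebra R S] [Module.Flat R S]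
  (Y : Type u) [AddCommGroup Y] [Module R Y] [Module S Y] [IsScalarTower R S Y]

/-- Flat base change in the first argument of `Ext`. -/
theorem EV_baseChange (i : ℕ) : ∀ (N : Type u) [AddCommGroup N] [Module R N],
    EV S (S ⊗[R] N) Y i ↔ EV R N Y i := by
  induction i with
  | zero =>
    intro N _ _
    rw [EV_zero_iff, EV_zero_iff]
    exact (LinearMap.liftBaseChangeEquiv (R := R) (M := N) (N := Y) S).symm.toEquiv.subsingleton_congr
  | succ i ih =>
    intro N _ _
    obtain ⟨P, _, _, g, _, hg⟩ := exists_free_cover (R := R) N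
    obtain ⟨K, _, _, f, hf, h⟩ : ∃ (K : Type u) (_ : AddCommGroup K) (_ : Module R K)
        (f : K →ₗ[R] P), Function.Injective f ∧ Function.Exact f g :=
      ⟨_, _, _, _, (LinearMap.ker g).injective_subtype, exact_subtype_ker g⟩
    have hf' : Function.Injective (f.baseChange S) := by
      rw [LinearMap.baseChange_eq_ltensor]
      exact Module.Flat.lTensor_preserves_injective_linearMap f hf
    have h' : Function.Exact (f.baseChange S) (g.baseChange S) := by
      rw [LinearMap.baseChange_eq_ltensor, LinearMap.baseChange_eq_ltensor]
      exact lTensor_exact S h hg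
    have hg' : Function.Surjective (g.baseChange S) := by
      rw [LinearMap.baseChange_eq_ltensor]
      exact LinearMap.lTensor_surjective S hg
    obtain rfl | hi := Nat.eq_zero_or_pos i
    · constructor
      · intro hv
        refine EV_one_of_extend hf h hg (EV.of_projective one_pos) fun k => ?_
        obtain ⟨l, hl⟩ := hv.extend hf' h' hg' (k.liftBaseChange S)
        refine ⟨(LinearMap.liftBaseChangeEquiv S).symm l, LinearMap.ext fun x => ?_⟩
        have := congrArg (fun t => t (1 ⊗ₜ x)) hl
        simpa using this
      · intro hv
        refine EV_one_of_extend hf' h' hg' (EV.of_projective one_pos) fun k => ?_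
        obtain ⟨l, hl⟩ := hv.extend hf h hg ((LinearMap.liftBaseChangeEquiv S).symm k)
        refine ⟨l.liftBaseChange S, ?_⟩
        apply (LinearMap.liftBaseChangeEquiv (R := R) S).symm.injective
        rw [← hl]
        ext x
        simp
    · constructor
      · intro hv
        exact EV.contra₃ hf h hg ((ih K).1 (EV.contra₁ hf' h' hg' (EV.of_projective hi) hv))
          (EV.of_projective (by omega))
      · intro hv
        exact EV.contra₃ hf' h' hg' ((ih K).2 (EV.contra₁ hf h hg (EV.of_projective hi) hv))
          (EV.of_projective (by omega))

theorem EV_baseChange_tensor [IsNoetherianRing R] (N C : Type u) [AddCommGroup N] [Module R N]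
    [Module.Finite R N] [AddCommGroup C] [Module R C] (i : ℕ) :
    EV S (S ⊗[R] N) (S ⊗[R] C) i ↔ Subsingleton (S ⊗[R] EX R N C i) := by
  rw [EV_baseChange, EV_tensor_iff]

/-- Semidualizing modules are preserved by flat base change. -/
theorem SD.baseChange [IsNoetherianRing R] {C : Type u} [AddCommGroup C] [Module R C]
    (hC : SD R C) : SD S (S ⊗[R] C) := by
  have := hC.fin
  refine ⟨inferInstance, ?_, fun i hi => ?_⟩
  · let hom : R ≃ₗ[R] (C →ₗ[R] C) :=
      LinearEquiv.ofBijective (LinearMap.toSpanSingleton R _ LinearMap.id) hC.hom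
    have h1 := (LinearMap.liftBaseChangeEquiv (R := R) (M := C) (N := S ⊗[R] C) S).bijective.comp
      ((hom_tensor_bijective (R := R) C S C).comp ((hom.lTensor S).bijective.comp
        (TensorProduct.rid R S).symm.bijective))
    refine (iff_of_eq (congrArg Function.Bijective ?_)).1 h1
    funext s
    ext c
    change (1 : S) • (s ⊗ₜ[R] ((1 : R) • c)) = s • (1 ⊗ₜ c)
    rw [one_smul, one_smul, TensorProduct.smul_tmul', smul_eq_mul, mul_one]
  · rw [EV_baseChange_tensor]
    have : Subsingleton (EX R C C i) := hC.ext i hi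
    infer_instance

end basechange

lemma SD.of_equiv {C D : Type u} [AddCommGroup C] [Module R C] [AddCommGroup D] [Module R D]
    (e : C ≃ₗ[R] D) (hC : SD R C) : SD R D := by
  have := hC.fin
  refine ⟨Module.Finite.equiv e, ?_, fun i hi => (hC.ext i hi).of_equiv e e⟩
  refine (iff_of_eq (congrArg Function.Bijective ?_)).1
    ((e.arrowCongr e).bijective.comp hC.hom)
  funext r
  ext x
  simp

section loc
variable (p : Ideal R) [p.IsPrime]

/-- For `X` finitely generated, `X_p = 0` if and only if `ann X` is not contained in `p`. -/
lemma loc_subsingleton_iff (X : Type u) [AddCommGroup X] [Module R X] [Module.Finite R X] :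
    Subsingleton (Localization.AtPrime p ⊗[R] X) ↔ ¬ Module.annihilator R X ≤ p := by
  rw [← (LocalizedModule.equivTensorProduct p.primeCompl X).toEquiv.subsingleton_congr,
    ← Module.mem_support_iff_of_finite (p := ⟨p, inferInstance⟩), Module.notMem_support_iff]

variable [IsNoetherianRing R] (C : Type u) [AddCommGroup C] [Module R C]

/-- Bounded injective dimension of `C_p`, tested on the cyclic modules `R ⧸ I`. -/
lemma loc_injDim (n : ℕ)
    (h : ∀ I : Ideal R, Subsingleton (Localization.AtPrime p ⊗[R] EX R (R ⧸ I) C (n + 1)))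
    (N : Type u) [AddCommGroup N] [Module (Localization.AtPrime p) N] (i : ℕ) (hi : n < i) :
    EV (Localization.AtPrime p) N (Localization.AtPrime p ⊗[R] C) i := by
  refine EV_of_ideals n _ (fun 𝔟 => ?_) N i hi
  have e := Ideal.qoutMapEquivTensorQout (R := R) (Localization.AtPrime p) (I := 𝔟.under R)
  rw [IsLocalization.map_under p.primeCompl] at e
  exact ((EV_baseChange_tensor (Localization.AtPrime p) (R ⧸ 𝔟.under R) C (n + 1)).2
    (h _)).of_equiv e.symm (.refl _ _)

/-- `IsPointwiseDualizing` with `LocalizedModule` replaced by the tensor product with the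
localization. Semidualizing localizes automatically, so only injective dimension matters. -/
lemma pointwise_iff (hC : SD R C) : IsPointwiseDualizing R C ↔
    ∀ (p : Ideal R) [p.IsPrime], p.IsMaximal → ∃ n : ℕ,
      ∀ (N : Type u) [AddCommGroup N] [Module (Localization.AtPrime p) N] (i : ℕ), n < i →
        EV (Localization.AtPrime p) N (Localization.AtPrime p ⊗[R] C) i := by
  have h1 := isSemidualizing_iff.2 hC
  have e (p : Ideal R) [p.IsPrime] := LocalizedModule.equivTensorProduct p.primeCompl C
  constructor
  · intro h p _ hp
    obtain ⟨n, hn⟩ := ENat.ne_top_iff_exists.1 (h.2 p hp).2.ne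
    have := injDim_le_iff.1 hn.symm.le
    exact ⟨n, fun N _ _ i hi => (this N _ _ i hi).of_equiv (.refl _ _) (e p)⟩
  · intro h
    refine ⟨h1, fun p _ hp => ⟨isSemidualizing_iff.2
      ((hC.baseChange (Localization.AtPrime p)).of_equiv (e p).symm), ?_⟩⟩
    obtain ⟨n, hn⟩ := h p hp
    exact (injDim_le_iff.2 fun N _ _ i hi =>
      (hn N i hi).of_equiv (.refl _ _) (e p).symm).trans_lt (ENat.natCast_lt_top n)

end loc
end
end PwDual

/-! ### Depth and injective dimension over a local ring -/

namespace PwDual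
open TensorProduct
section
variable {R : Type u} [CommRing R]

section smul
variable {A Y : Type u} [AddCommGroup A] [Module R A] [AddCommGroup Y] [Module R Y]

lemma mk₀_lsmul_comp (x : R) {i : ℕ} (y : EX R A Y i) :
    (Abelian.Ext.mk₀ (ModuleCat.ofHom (LinearMap.lsmul R A x))).comp y (zero_add i) = x • y := by
  have : ModuleCat.ofHom (LinearMap.lsmul R A x) = x • 𝟙 (ModuleCat.of R A) := by
    ext z; simp
  rw [this, Abelian.Ext.mk₀_smul, Abelian.Ext.smul_comp, Abelian.Ext.mk₀_id_comp]

lemma comp_mk₀_lsmul (x : R) {i : ℕ} (y : EX R Y A i) :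
    y.comp (Abelian.Ext.mk₀ (ModuleCat.ofHom (LinearMap.lsmul R A x))) (add_zero i) = x • y := by
  have : ModuleCat.ofHom (LinearMap.lsmul R A x) = x • 𝟙 (ModuleCat.of R A) := by
    ext z; simp
  rw [this, Abelian.Ext.mk₀_smul, Abelian.Ext.comp_smul, Abelian.Ext.comp_mk₀_id]

lemma ext_smul_zero {x : R} (hx : ∀ z : A, x • z = 0) {i : ℕ} (y : EX R A Y i) : x • y = 0 := by
  rw [← mk₀_lsmul_comp]
  have : ModuleCat.ofHom (LinearMap.lsmul R A x) = 0 := by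
    ext z; simpa using hx z
  rw [this, Abelian.Ext.mk₀_zero, Abelian.Ext.zero_comp]

/-- The quotient `A ⧸ x A`. -/
abbrev modx (A : Type u) [AddCommGroup A] [Module R A] (x : R) : Type u :=
  A ⧸ LinearMap.range (LinearMap.lsmul R A x)

lemma modx_smul (x : R) (z : modx A x) : x • z = 0 := by
  obtain ⟨z, rfl⟩ := Submodule.mkQ_surjective _ z
  rw [← map_smul]
  exact (Submodule.Quotient.mk_eq_zero _).2 ⟨z, rfl⟩

variable {x : R} (hx : Function.Injective (LinearMap.lsmul R A x))
include hx

/-- From `0 → A → A → A ⧸ x A → 0`: `x` is surjective on `Ext^i(A, Y)` when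
`Ext^{i+1}(A ⧸ x A, Y) = 0`. -/
lemma smul_surj {i : ℕ} (h : EV R (modx A x) Y (i + 1)) (y : EX R A Y i) : ∃ z, x • z = y := by
  obtain ⟨z, hz⟩ := Abelian.Ext.contravariant_sequence_exact₁
    (sc_shortExact hx (exact_mkQ_range _) (Submodule.mkQ_surjective _)) _ y
    (add_comm 1 i) (@Subsingleton.elim _ h _ _)
  exact ⟨z, by rw [← mk₀_lsmul_comp]; exact hz⟩

/-- From `0 → A → A → A ⧸ x A → 0`: `x` is injective on `Ext^i(A, Y)` when
`Ext^i(A ⧸ x A, Y) = 0`. -/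
lemma smul_inj {i : ℕ} (h : EV R (modx A x) Y i) (y : EX R A Y i) (hy : x • y = 0) : y = 0 := by
  obtain ⟨z, hz⟩ := Abelian.Ext.contravariant_sequence_exact₂
    (sc_shortExact hx (exact_mkQ_range _) (Submodule.mkQ_surjective _)) _ y
    (by rw [← hy, ← mk₀_lsmul_comp])
  rw [← hz, @Subsingleton.elim _ h z 0, Abelian.Ext.comp_zero]

lemma EV_of_modx {i : ℕ} (hk : ∀ z : Y, x • z = 0) (h : EV R Y (modx A x) i) :
    EV R Y A (i + 1) := by
  refine subsingleton_of_forall_eq 0 fun y => ?_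
  obtain ⟨z, hz⟩ := Abelian.Ext.covariant_sequence_exact₁ _
    (sc_shortExact hx (exact_mkQ_range _) (Submodule.mkQ_surjective _)) y
    ((comp_mk₀_lsmul x y).trans (ext_smul_zero hk y)) rfl
  rw [← hz, @Subsingleton.elim _ h z 0, Abelian.Ext.zero_comp]

end smul

/-- Vanishing of `Ext^i(-, Y)` on finitely generated modules killed by `I` follows, by prime
filtrations, from its vanishing on the domains `R ⧸ q` with `q ⊇ I`. -/
lemma EV_of_primes [IsNoetherianRing R] {Y : Type u} [AddCommGroup Y] [Module R Y] {i : ℕ}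
    {I : Ideal R} (H : ∀ q : Ideal R, q.IsPrime → I ≤ q → EV R (R ⧸ q) Y i)
    (N : Type u) [AddCommGroup N] [Module R N] [hN : Module.Finite R N]
    (hI : I ≤ Module.annihilator R N) : EV R N Y i := by
  revert hI
  refine IsNoetherianRing.induction_on_isQuotientEquivQuotientPrime R hN
    (motive := fun N _ _ _ => I ≤ Module.annihilator R N → EV R N Y i) ?_ ?_ ?_
  · intro N _ _ _ _ _
    refine subsingleton_of_forall_eq 0 fun y => ?_
    rw [← one_smul R y]
    exact ext_smul_zero (fun z => Subsingleton.elim _ _) y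
  · intro N _ _ _ p e hI
    refine (H p.asIdeal p.2 fun r hr => ?_).of_equiv e.symm (.refl _ _)
    have := Module.mem_annihilator.1 (hI hr) (e.symm 1)
    rw [← map_smul, LinearEquiv.map_eq_zero_iff, ← map_one (Ideal.Quotient.mk _)] at this
    have h2 : Ideal.Quotient.mk p.asIdeal (r * 1) = 0 := this
    simpa [Ideal.Quotient.eq_zero_iff_mem] using h2
  · intro N₁ _ _ _ N₂ _ _ _ N₃ _ _ _ f g hf hg h h1 h3 hI
    exact EV.contra₂ hf h hg
      (h1 (hI.trans (f.annihilator_le_of_injective hf)))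
      (h3 (hI.trans (g.annihilator_le_of_surjective hg)))

lemma lsmul_quot_prime_injective {q : Ideal R} (hq : q.IsPrime) {x : R} (hx : x ∉ q) :
    Function.Injective (LinearMap.lsmul R (R ⧸ q) x) := by
  rw [injective_iff_map_eq_zero]
  intro y hy
  obtain ⟨y, rfl⟩ := Ideal.Quotient.mk_surjective y
  have h2 : Ideal.Quotient.mk q (x * y) = 0 := hy
  rw [Ideal.Quotient.eq_zero_iff_mem] at h2 ⊢
  exact (hq.mem_or_mem h2).resolve_left hx

section localring
variable {S : Type u} [CommRing S] [IsNoetherianRing S] [IsLocalRing S]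
  {D : Type u} [AddCommGroup D] [Module S D] [Module.Finite S D]

open IsLocalRing

/-- If `Ext^{t+1}(-, D)` vanishes on finitely generated modules, then vanishing of `Ext^t(-, D)` can
be tested on the residue field. For a nonmaximal prime `q` and a nonunit `x ∉ q`, multiplication by
`x` is surjective on `Ext^t(S ⧸ q, D)`, which is therefore zero by Nakayama's lemma. -/
lemma EV_all_of_residue {t : ℕ} (hk : EV S (S ⧸ maximalIdeal S) D t)
    (H : ∀ (N : Type u) [AddCommGroup N] [Module S N] [Module.Finite S N], EV S N D (t + 1))
    (N : Type u) [AddCommGroup N] [Module S N] [Module.Finite S N] : EV S N D t := by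
  refine EV_of_primes (I := ⊥) (fun q hq _ => ?_) N bot_le
  by_cases hqm : q = maximalIdeal S
  · rwa [hqm]
  obtain ⟨x, hxm, hxq⟩ := SetLike.exists_of_lt (lt_of_le_of_ne (le_maximalIdeal hq.ne_top) hqm)
  have hfin : Module.Finite S (EX S (S ⧸ q) D t) := ModuleCat.finite_ext _ _ _ _
  have : (⊤ : Submodule S (EX S (S ⧸ q) D t)) = ⊥ := by
    refine Submodule.eq_bot_of_le_smul_of_le_jacobson_bot (maximalIdeal S) _ hfin.fg_top
      (fun y _ => ?_) (maximalIdeal_le_jacobson _)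
    obtain ⟨z, rfl⟩ := smul_surj (lsmul_quot_prime_injective hq hxq) (H _) y
    exact Submodule.smul_mem_smul hxm trivial
  exact subsingleton_of_forall_eq 0 fun y => by
    have : y ∈ (⊤ : Submodule S (EX S (S ⧸ q) D t)) := trivial
    simp_all

/-- If `A` has depth `l` and `Ext^i(A, D) = 0` for `i > a`, then `Ext^t(-, D) = 0` on finitely
generated modules for `t > a + l`. A regular element on `A` lowers `l` and raises `a`; when `l = 0`
the residue field embeds in `A`, and one descends from the injective dimension of `D`. -/
lemma depth_bound (n : ℕ)
    (hn : ∀ (N : Type u) [AddCommGroup N] [Module S N] (i : ℕ), n < i → EV S N D i) (l : ℕ) :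
    ∀ (A : Type u) [AddCommGroup A] [Module S A] [Module.Finite S A] (a : ℕ),
      (∀ i, a < i → EV S A D i) → (∀ i < l, EV S (S ⧸ maximalIdeal S) A i) →
      ¬ EV S (S ⧸ maximalIdeal S) A l → ∀ t, a + l < t →
      ∀ (N : Type u) [AddCommGroup N] [Module S N] [Module.Finite S N], EV S N D t := by
  induction l with
  | zero =>
    intro A _ _ _ a hA _ hl t ht
    rw [EV_zero_iff, not_subsingleton_iff_nontrivial] at hl
    obtain ⟨k, hk⟩ := exists_ne (0 : (S ⧸ maximalIdeal S) →ₗ[S] A)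
    have hinj : Function.Injective k := by
      have : IsSimpleModule S (S ⧸ maximalIdeal S) := by
        rw [isSimpleModule_iff_isCoatom]
        exact (maximalIdeal.isMaximal S).1
      exact (LinearMap.injective_or_eq_zero k).resolve_right hk
    suffices ∀ d t : ℕ, a < t → n < t + d → ∀ (N : Type u) [AddCommGroup N] [Module S N]
        [Module.Finite S N], EV S N D t from this (n + 1) t ht (by omega)
    intro d
    induction d with
    | zero => intro t _ h N _ _ _; exact hn N t h
    | succ d ih =>
      intro t hat h
      refine EV_all_of_residue ?_ (ih (t + 1) (by omega) (by omega))
      exact EV.contra₁ hinj (exact_mkQ_range k) (Submodule.mkQ_surjective _) (hA t hat)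
        (ih (t + 1) (by omega) (by omega) _)
  | succ l ih =>
    intro A _ _ _ a hA hlt hl t ht
    have h0 := hlt 0 (by omega)
    rw [EV_zero_iff, IsSMulRegular.subsingleton_linearMap_iff] at h0
    obtain ⟨x, hxk, hx⟩ := h0
    have hxi : Function.Injective (LinearMap.lsmul S A x) := hx
    have hk : ∀ z : S ⧸ maximalIdeal S, x • z = 0 := Module.mem_annihilator.1 hxk
    refine ih (modx A x) (a + 1) (fun i hi => ?_) (fun i hi => ?_) (fun h => ?_) t (by omega)
    · obtain ⟨i, rfl⟩ : ∃ i', i = i' + 1 := ⟨i - 1, by omega⟩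
      exact EV.contra₃ hxi (exact_mkQ_range _) (Submodule.mkQ_surjective _) (hA i (by omega))
        (hA _ (by omega))
    · exact EV.cov₃ hxi (exact_mkQ_range _) (Submodule.mkQ_surjective _) (hlt i (by omega))
        (hlt _ (by omega))
    · exact hl (EV_of_modx hxi hk h)

/-- Over a local ring, a module `D` of finite injective dimension without self-extensions has
injective dimension at most its depth. -/
lemma local_lemma (n : ℕ)
    (hn : ∀ (N : Type u) [AddCommGroup N] [Module S N] (i : ℕ), n < i → EV S N D i)
    (hD : ∀ i, 0 < i → EV S D D i) (N : Type u) [AddCommGroup N] [Module S N] [Module.Finite S N]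
    (j : ℕ) (hj : ¬ EV S N D j) (i : ℕ) (hij : i < j) : EV S (S ⧸ maximalIdeal S) D i := by
  classical
  by_contra hi
  have hex : ∃ i, ¬ EV S (S ⧸ maximalIdeal S) D i := ⟨i, hi⟩
  have hle := Nat.find_min' hex hi
  exact hj (depth_bound n hn (Nat.find hex) D 0 hD (fun i hi => not_not.1 (Nat.find_min hex hi))
    (Nat.find_spec hex) j (by omega) N)

end localring
end
end PwDual

/-! ### The grade condition -/

namespace PwDual
open TensorProduct
section
variable {R : Type u} [CommRing R] [IsNoetherianRing R] {C : Type u} [AddCommGroup C] [Module R C]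

instance finite_EX (N C : Type u) [AddCommGroup N] [Module R N] [Module.Finite R N]
    [AddCommGroup C] [Module R C] [Module.Finite R C] (i : ℕ) : Module.Finite R (EX R N C i) :=
  ModuleCat.finite_ext _ _ _ _

/-- A pointwise dualizing module satisfies the Gorenstein-type grade condition: the annihilator
of `Ext^j(N, C)` has grade at least `j` on `C`. -/
theorem grade_condition (hC : SD R C) (hP : IsPointwiseDualizing R C)
    (N : Type u) [AddCommGroup N] [Module R N] [Module.Finite R N] (j : ℕ) (i : ℕ) (hij : i < j) :
    EV R (R ⧸ Module.annihilator R (EX R N C j)) C i := by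
  have := hC.fin
  rw [pointwise_iff C hC] at hP
  set 𝔞 := Module.annihilator R (EX R N C j) with h𝔞
  -- at such `p` the module `Ext^j(N, C)` is nonzero, so `local_lemma` applies over `R_p`
  have step1 : ∀ p : Ideal R, p.IsPrime → 𝔞 ≤ p →
      ¬ Module.annihilator R (EX R (R ⧸ p) C i) ≤ p := by
    intro p hp hap
    obtain ⟨m, hm, hpm⟩ := Ideal.exists_le_maximal p hp.ne_top
    have := hm.isPrime
    obtain ⟨n, hn⟩ := hP m hm
    have hn' := loc_injDim p C n fun I => by
      rw [loc_subsingleton_iff]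
      have h1 := hn (Localization.AtPrime m ⊗[R] (R ⧸ I)) (n + 1) (by omega)
      rw [EV_baseChange_tensor, loc_subsingleton_iff] at h1
      exact fun h2 => h1 (h2.trans hpm)
    have hj : ¬ EV (Localization.AtPrime p) (Localization.AtPrime p ⊗[R] N)
        (Localization.AtPrime p ⊗[R] C) j := by
      rw [EV_baseChange_tensor, loc_subsingleton_iff]
      exact not_not.2 hap
    have hfin := (hC.baseChange (Localization.AtPrime p)).fin
    have : IsNoetherianRing (Localization.AtPrime p) :=
      IsLocalization.isNoetherianRing p.primeCompl _ inferInstance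
    have h2 := local_lemma n hn' (hC.baseChange (Localization.AtPrime p)).ext _ j hj i hij
    have e := Ideal.qoutMapEquivTensorQout (R := R) (Localization.AtPrime p) (I := p)
    rw [Localization.AtPrime.map_eq_maximalIdeal] at e
    have h3 := h2.of_equiv e (.refl _ _)
    rwa [EV_baseChange_tensor, loc_subsingleton_iff] at h3
  -- noetherian induction on `p`: some `s ∉ p` kills `Ext^i(R ⧸ p, C)`, and multiplication by `s`
  -- is injective there because the primes containing `p` and `s` are strictly larger than `p`
  have step2 : ∀ p : Ideal R, p.IsPrime → 𝔞 ≤ p → EV R (R ⧸ p) C i := by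
    intro p
    refine IsNoetherian.induction (R := R) (M := R)
      (P := fun p : Ideal R => p.IsPrime → 𝔞 ≤ p → EV R (R ⧸ p) C i) (fun p ih hp hap => ?_) p
    obtain ⟨s, hs, hsp⟩ := SetLike.not_le_iff_exists.1 (step1 p hp hap)
    refine subsingleton_of_forall_eq 0 fun y => ?_
    refine smul_inj (lsmul_quot_prime_injective hp hsp) ?_ y (Module.mem_annihilator.1 hs y)
    refine EV_of_primes (I := p ⊔ Ideal.span {s}) (fun q hq hpq => ih q ?_ hq ?_) _ ?_
    · refine lt_of_le_of_ne (le_sup_left.trans hpq) ?_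
      rintro rfl
      exact hsp (hpq (Ideal.mem_sup_right (Ideal.mem_span_singleton_self s)))
    · exact hap.trans (le_sup_left.trans hpq)
    · refine sup_le ?_ ?_
      · refine le_trans ?_ (LinearMap.annihilator_le_of_surjective _
          (Submodule.mkQ_surjective (LinearMap.range (LinearMap.lsmul R (R ⧸ p) s))))
        rw [Ideal.annihilator_quotient]
      · rw [Ideal.span_le, Set.singleton_subset_iff]
        exact Module.mem_annihilator.2 (modx_smul s)
  refine EV_of_primes (fun p hp h => step2 p hp h) _ ?_
  rw [Ideal.annihilator_quotient]

end
end PwDual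

/-! ### Injective hulls -/

namespace PwDual
open TensorProduct
section
variable {R : Type u} [CommRing R]

lemma injective_of_retract {I J : Type u} [AddCommGroup I] [Module R I] [AddCommGroup J]
    [Module R J] [Module.Injective R J] (i : I →ₗ[R] J) (r : J →ₗ[R] I)
    (h : ∀ x, r (i x) = x) : Module.Injective R I := by
  refine ⟨fun X Y _ _ _ _ f hf g => ?_⟩
  obtain ⟨l, hl⟩ := Module.Injective.out f hf (i ∘ₗ g)
  exact ⟨r ∘ₗ l, fun x => by simp [hl, h]⟩

/-- `I` is an essential extension of `A`, as submodules of some ambient module. -/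
def Ess {J : Type u} [AddCommGroup J] [Module R J] (A I : Submodule R J) : Prop :=
  A ≤ I ∧ ∀ x ∈ I, x ≠ 0 → ∃ r : R, r • x ∈ A ∧ r • x ≠ 0

/-- Every module has an injective hull: a maximal essential extension inside an injective module
is a direct summand of it. -/
theorem exists_injective_hull (A : Type u) [AddCommGroup A] [Module R A] :
    ∃ (I : Type u) (_ : AddCommGroup I) (_ : Module R I) (f : A →ₗ[R] I),
      Module.Injective R I ∧ Function.Injective f ∧
      ∀ z : I, z ≠ 0 → ∃ (r : R) (a : A), r • z = f a ∧ f a ≠ 0 := by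
  obtain ⟨J, _, _, f, hJ, hf⟩ := exists_injective_embedding (R := R) A
  obtain ⟨I, hI₀, hI⟩ := zorn_le_nonempty₀ {I | Ess (LinearMap.range f) I} (by
    intro c hc hchain y hy
    refine ⟨sSup c, ⟨(hc hy).1.trans (le_sSup hy), fun x hx hx0 => ?_⟩, fun z hz => le_sSup hz⟩
    obtain ⟨I, hI, hxI⟩ := (Submodule.mem_sSup_of_directed ⟨y, hy⟩ hchain.directedOn).1 hx
    exact (hc hI).2 x hxI hx0) (LinearMap.range f) ⟨le_rfl, fun x hx hx0 =>
      ⟨1, by rwa [one_smul], by rwa [one_smul]⟩⟩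
  -- `K` is maximal among the submodules meeting `I` trivially, so `I` is essential in `J ⧸ K`
  obtain ⟨K, -, hK⟩ := zorn_le_nonempty₀ {K : Submodule R J | ∀ x ∈ K, x ∈ I → x = 0} (by
    intro c hc hchain y hy
    refine ⟨sSup c, fun x hx hxI => ?_, fun z hz => le_sSup hz⟩
    obtain ⟨K, hK, hxK⟩ := (Submodule.mem_sSup_of_directed ⟨y, hy⟩ hchain.directedOn).1 hx
    exact hc hK x hxK hxI) ⊥ (fun x hx _ => hx)
  have hKI := hK.1
  have hmax : ∀ x ∉ K, ∃ k ∈ K, ∃ r : R, k + r • x ∈ I ∧ k + r • x ≠ 0 := by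
    intro x hx
    by_contra! hcon
    refine hx ?_
    have : K ⊔ Submodule.span R {x} ≤ K := hK.2 (fun y hy hyI => ?_) le_sup_left
    · exact this (Submodule.mem_sup_right (Submodule.mem_span_singleton_self x))
    · obtain ⟨k, hk, w, hw, rfl⟩ := Submodule.mem_sup.1 hy
      obtain ⟨r, rfl⟩ := Submodule.mem_span_singleton.1 hw
      exact hcon k hk r hyI
  -- `h` extends the inclusion of `I` to `J ⧸ K`; it is injective by essentiality, so its image is an
  -- essential extension of `A`, hence equal to `I`, and `h` yields a retraction of `J` onto `I`
  obtain ⟨h, hh⟩ := inj_factor (K.mkQ ∘ₗ I.subtype) I.subtype (by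
    intro x hx
    have : (x : J) ∈ K := by simpa using hx
    simpa using hKI _ this x.2)
  have hh' : ∀ x ∈ I, h (K.mkQ x) = x := fun x hx => congrArg (fun t => t ⟨x, hx⟩) hh
  have key : ∀ x ∉ K, ∃ r : R, r • h (K.mkQ x) ∈ I ∧ r • h (K.mkQ x) ≠ 0 := by
    intro x hx
    obtain ⟨k, hk, r, h1, h2⟩ := hmax x hx
    have : r • h (K.mkQ x) = k + r • x := by
      rw [← hh' _ h1, map_add, map_smul, map_add, map_smul]
      simp [(Submodule.Quotient.mk_eq_zero K).2 hk]
    exact ⟨r, this ▸ h1, this ▸ h2⟩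
  have hle : I ≤ LinearMap.range h := fun x hx => ⟨_, hh' x hx⟩
  have hrange : LinearMap.range h ≤ I := by
    refine hI.2 ⟨hI.1.1.trans hle, ?_⟩ hle
    rintro _ ⟨x, rfl⟩ hx0
    obtain ⟨x, rfl⟩ := K.mkQ_surjective x
    obtain ⟨r, h1, h2⟩ := key x (fun hx => hx0 (by
      rw [show K.mkQ x = 0 from (Submodule.Quotient.mk_eq_zero K).2 hx, map_zero]))
    obtain ⟨s, h3, h4⟩ := hI.1.2 _ h1 h2
    exact ⟨s * r, by rwa [mul_smul], by rwa [mul_smul]⟩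
  refine ⟨I, inferInstance, inferInstance, f.codRestrict I fun a => hI₀ ⟨a, rfl⟩,
    injective_of_retract I.subtype ((h ∘ₗ K.mkQ).codRestrict I fun x => hrange ⟨_, rfl⟩)
      fun x => Subtype.ext (hh' x x.2), fun a b hab => hf (congrArg Subtype.val hab), fun z hz => ?_⟩
  obtain ⟨r, ⟨a, ha⟩, h2⟩ := hI.1.2 z z.2 (by simpa using hz)
  refine ⟨r, a, Subtype.ext ha.symm, fun h => h2 ?_⟩
  rw [← ha]
  exact congrArg Subtype.val h

end
end PwDual

/-! ### Endomorphisms of the dual of an injective hull -/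

namespace PwDual
open TensorProduct
section
variable {R : Type u} [CommRing R] [IsNoetherianRing R] {I E : Type u} [AddCommGroup I] [Module R I]
  [AddCommGroup E] [Module R E] [Module.Injective R E]

/-- For `E` injective, `𝔞 Hom(I, E)` consists of the maps vanishing on the `𝔞`-torsion of `I`. -/
lemma mem_smul_hom_iff (𝔞 : Ideal R) (f : I →ₗ[R] E) :
    f ∈ (𝔞 • ⊤ : Submodule R (I →ₗ[R] E)) ↔ ∀ z, (∀ a ∈ 𝔞, a • z = 0) → f z = 0 := by
  constructor
  · intro hf z hz
    refine Submodule.smul_induction_on hf (fun a ha g _ => ?_) (fun g g' h h' => ?_)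
    · rw [LinearMap.smul_apply, ← map_smul, hz a ha, map_zero]
    · rw [LinearMap.add_apply, h, h', add_zero]
  · intro h
    classical
    obtain ⟨s, rfl⟩ := IsNoetherian.noetherian 𝔞
    let g : I →ₗ[R] (s → I) := LinearMap.pi fun a => LinearMap.lsmul R I a
    obtain ⟨l, hl⟩ := inj_factor g f (by
      intro z hz
      refine h z fun a ha => ?_
      have h2 : Ideal.span (s : Set R) ≤ LinearMap.ker (LinearMap.toSpanSingleton R I z) := by
        rw [Ideal.span_le]
        intro b hb
        exact congrFun hz ⟨b, hb⟩
      exact h2 ha)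
    have : f = ∑ a : s, (a : R) • (l ∘ₗ LinearMap.single R (fun _ : s => I) a) := by
      rw [← hl]
      ext z
      rw [LinearMap.sum_apply, LinearMap.comp_apply,
        show g z = ∑ a : s, Pi.single a ((a : R) • z) from (Finset.univ_sum_single (g z)).symm,
        map_sum]
      refine Finset.sum_congr rfl fun a _ => ?_
      simp only [LinearMap.smul_apply, LinearMap.comp_apply]
      rw [← map_smul, ← map_smul]
      rfl
    rw [this]
    exact Submodule.sum_mem _ fun a _ =>
      Submodule.smul_mem_smul (Submodule.subset_span a.2) trivial

/-- Every endomorphism of `Hom(I, E)` preserves `𝔞 Hom(I, E)`, that is, the maps vanishing on the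
`𝔞`-torsion of `I`. -/
lemma vanish_stable (𝔞 : Ideal R) (τ : (I →ₗ[R] E) →ₗ[R] (I →ₗ[R] E)) (f : I →ₗ[R] E)
    (hf : ∀ z, (∀ a ∈ 𝔞, a • z = 0) → f z = 0) (z : I) (hz : ∀ a ∈ 𝔞, a • z = 0) :
    τ f z = 0 := by
  rw [← mem_smul_hom_iff] at hf
  refine (mem_smul_hom_iff 𝔞 (τ f)).1 ?_ z hz
  have h1 := Submodule.mem_map_of_mem (f := τ) hf
  rw [Submodule.map_smul''] at h1
  exact Submodule.smul_mono le_rfl le_top h1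

/-- The `p`-power torsion submodule. -/
def Gam (p : Ideal R) (I : Type u) [AddCommGroup I] [Module R I] : Submodule R I where
  carrier := {z | ∃ n : ℕ, ∀ a ∈ p ^ n, a • z = 0}
  zero_mem' := ⟨0, fun a _ => smul_zero a⟩
  add_mem' := by
    rintro x y ⟨n, hn⟩ ⟨m, hm⟩
    refine ⟨n + m, fun a ha => ?_⟩
    rw [smul_add, hn a (Ideal.pow_le_pow_right (Nat.le_add_right n m) ha),
      hm a (Ideal.pow_le_pow_right (Nat.le_add_left m n) ha), add_zero]
  smul_mem' := by
    rintro r x ⟨n, hn⟩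
    exact ⟨n, fun a ha => by rw [smul_comm, hn a ha, smul_zero]⟩

lemma vanish_stable_Gam (p : Ideal R) (τ : (I →ₗ[R] E) →ₗ[R] (I →ₗ[R] E)) (f : I →ₗ[R] E)
    (hf : ∀ z ∈ Gam p I, f z = 0) (z : I) (hz : z ∈ Gam p I) : τ f z = 0 := by
  obtain ⟨n, hn⟩ := hz
  exact vanish_stable (p ^ n) τ f (fun z hz => hf z ⟨n, hz⟩) z hn

section single
variable {p : Ideal R} (A' : Submodule R I)
  (hinj : ∀ s ∉ p, ∀ z ∈ Gam p I, s • z = 0 → z = 0)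
  (hess : ∀ z : I, (∀ a ∈ p, a • z = 0) → z ≠ 0 → ∃ s ∉ p, s • z ∈ A')
  (τ : (I →ₗ[R] E) →ₗ[R] (I →ₗ[R] E)) (hτ : ∀ f, ∀ z ∈ A', τ f z = 0)
include hinj hess hτ

/-- Let `τ` kill restrictions to `A'`. Elements outside `p` act injectively on the `p`-power torsion, so
`g` is divisible by any `s ∉ p` there; choosing `s` with `s z ∈ A'` gives `τ g z = 0`. -/
lemma tau_base (g : I →ₗ[R] E) (z : I) (hz : ∀ a ∈ p, a • z = 0) : τ g z = 0 := by
  by_cases hz0 : z = 0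
  · rw [hz0, map_zero]
  obtain ⟨s, hs, hsz⟩ := hess z hz hz0
  obtain ⟨g', hg'⟩ := inj_factor (s • (Gam p I).subtype) (g ∘ₗ (Gam p I).subtype) (by
    intro x hx
    have : (x : I) = 0 := hinj s hs x x.2 (by simpa using hx)
    simp [this])
  have h1 : ∀ x ∈ Gam p I, (g - s • g') x = 0 := fun x hx => by
    have := congrArg (fun t => t ⟨x, hx⟩) hg'
    simp only [LinearMap.comp_apply, LinearMap.smul_apply, Submodule.subtype_apply,
      map_smul] at this
    simp [this]
  have h2 := vanish_stable_Gam p τ _ h1 z ⟨1, by simpa using hz⟩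
  rw [map_sub, map_smul, LinearMap.sub_apply, sub_eq_zero] at h2
  rw [h2, LinearMap.smul_apply, ← map_smul, hτ _ _ hsz]

/-- `τ` improves vanishing on the `p ^ n`-torsion to vanishing on the `p ^ (n + 1)`-torsion. -/
lemma tau_step (n : ℕ) (f : I →ₗ[R] E) (hf : ∀ z, (∀ a ∈ p ^ n, a • z = 0) → f z = 0) (z : I)
    (hz : ∀ a ∈ p ^ (n + 1), a • z = 0) : τ f z = 0 := by
  rw [← mem_smul_hom_iff] at hf
  refine Submodule.smul_induction_on hf (fun a ha g _ => ?_) (fun g g' h h' => ?_)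
  · rw [map_smul, LinearMap.smul_apply, ← map_smul]
    refine tau_base A' hinj hess τ hτ g _ fun b hb => ?_
    rw [smul_smul]
    exact hz _ (by rw [pow_succ']; exact Ideal.mul_mem_mul hb ha)
  · rw [map_add, LinearMap.add_apply, h, h', add_zero]

lemma tau_pow (n : ℕ) (f : I →ₗ[R] E) : ∀ z, (∀ a ∈ p ^ n, a • z = 0) → (τ ^ n) f z = 0 := by
  induction n with
  | zero =>
    intro z hz
    have : z = 0 := by simpa using hz 1 (by simp)
    rw [this, map_zero]
  | succ n ih =>
    intro z hz
    rw [pow_succ', Module.End.mul_apply]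
    exact tau_step A' hinj hess τ hτ n _ ih z hz

/-- On the `p`-power torsion `τ` is locally nilpotent, so `1 - τ` is injective there. -/
lemma tau_inj (f : I →ₗ[R] E) (hf : τ f = f) (z : I) (hz : z ∈ Gam p I) : f z = 0 := by
  obtain ⟨n, hn⟩ := hz
  have : (τ ^ n) f = f := by
    clear hn
    induction n with
    | zero => simp
    | succ n ih => rw [pow_succ', Module.End.mul_apply, ih, hf]
  rw [← this]
  exact tau_pow A' hinj hess τ hτ n f z hn

/-- On the `p`-power torsion `1 - τ` is surjective, with inverse a locally finite geometric series. -/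
lemma tau_surj (h : I →ₗ[R] E) : ∃ f : I →ₗ[R] E, ∀ z ∈ Gam p I, (f - τ f) z = h z := by
  classical
  -- `N z` is the number of terms of the geometric series that matter at `z`
  let N : Gam p I → ℕ := fun z => Nat.find z.2
  have hN (z : Gam p I) : ∀ a ∈ p ^ N z, a • (z : I) = 0 := Nat.find_spec z.2
  have hvan (z : Gam p I) (n : ℕ) (hn : N z ≤ n) : (τ ^ n) h z = 0 :=
    tau_pow A' hinj hess τ hτ n h z fun a ha => hN z a (Ideal.pow_le_pow_right hn ha)
  let F : Gam p I → E := fun z => ∑ k ∈ Finset.range (N z), (τ ^ k) h z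
  have hF (z : Gam p I) (n : ℕ) (hn : N z ≤ n) :
      F z = ∑ k ∈ Finset.range n, (τ ^ k) h z :=
    Finset.sum_subset (by simpa using hn) fun k _ hk => hvan z k (by simpa using hk)
  let F' : Gam p I →ₗ[R] E :=
    { toFun := F
      map_add' := fun x y => by
        rw [hF x (N x + N y + N (x + y)) (by omega), hF y (N x + N y + N (x + y)) (by omega),
          hF (x + y) (N x + N y + N (x + y)) (by omega), ← Finset.sum_add_distrib]
        exact Finset.sum_congr rfl fun k _ => by simp
      map_smul' := fun r x => by
        rw [hF x (N x + N (r • x)) (by omega), hF (r • x) (N x + N (r • x)) (by omega),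
          RingHom.id_apply, Finset.smul_sum]
        exact Finset.sum_congr rfl fun k _ => by simp }
  obtain ⟨f, hf⟩ := inj_factor (Gam p I).subtype F' (by simp)
  refine ⟨f, fun z hz => ?_⟩
  obtain ⟨n, hn⟩ := hz
  -- on the `p ^ n`-torsion, `f` agrees with a finite geometric sum
  have h1 : ∀ w, (∀ a ∈ p ^ n, a • w = 0) → (f - ∑ k ∈ Finset.range n, (τ ^ k) h) w = 0 := by
    intro w hw
    have h2 : f w = F ⟨w, n, hw⟩ := congrArg (fun t => t ⟨w, n, hw⟩) hf
    rw [LinearMap.sub_apply, h2, hF _ n (Nat.find_min' _ hw), LinearMap.sum_apply, sub_self]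
  have h3 := vanish_stable (p ^ n) (1 - τ) _ h1 z hn
  rw [map_sub, LinearMap.sub_apply, sub_eq_zero] at h3
  have h4 : (1 - τ) (∑ k ∈ Finset.range n, (τ ^ k) h) = h - (τ ^ n) h := by
    have := congrArg (fun t : Module.End R (I →ₗ[R] E) => t h) (mul_neg_geom_sum τ n)
    simpa [Module.End.mul_apply, LinearMap.sum_apply] using this
  rw [h4, LinearMap.sub_apply h, tau_pow A' hinj hess τ hτ n h z hn, sub_zero] at h3
  exact h3

end single

/-- If `x ∉ Gam p I`, some nonzero submodule of `R x` meets `Gam p I` trivially (Artin-Rees). -/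
lemma exists_smul_avoid (p : Ideal R) (x : I) (hx : x ∉ Gam p I) :
    ∃ a : R, a • x ≠ 0 ∧ ∀ r : R, r • a • x ∈ Gam p I → r • a • x = 0 := by
  let W := Submodule.span R {x}
  let G : Submodule R W := (Gam p I).comap W.subtype
  obtain ⟨c, hc⟩ : ∃ c : ℕ, ∀ w : W, w ∈ G → ∀ a ∈ p ^ c, a • w = 0 := by
    obtain ⟨s, hs⟩ := IsNoetherian.noetherian G
    have h1 : ∀ w ∈ s, ∃ n : ℕ, ∀ a ∈ p ^ n, a • w = 0 := fun w hw => by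
      have : w ∈ G := hs ▸ Submodule.subset_span hw
      obtain ⟨n, hn⟩ := this
      exact ⟨n, fun a ha => Subtype.ext (hn a ha)⟩
    choose! n hn using h1
    refine ⟨s.sup n, fun w hw a ha => ?_⟩
    rw [← hs] at hw
    have h2 : Submodule.span R (s : Set W) ≤ LinearMap.ker (LinearMap.lsmul R W a) := by
      rw [Submodule.span_le]
      exact fun v hv => hn v hv a (Ideal.pow_le_pow_right (Finset.le_sup hv) ha)
    exact h2 hw
  obtain ⟨k, hk⟩ := Ideal.exists_pow_inf_eq_pow_smul p G
  have hk' := hk (k + c) (by omega)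
  rw [Nat.add_sub_cancel_left] at hk'
  obtain ⟨a, ha, hax⟩ : ∃ a ∈ p ^ (k + c), a • x ≠ 0 := by
    by_contra! hcon
    exact hx ⟨k + c, hcon⟩
  refine ⟨a, hax, fun r hr => ?_⟩
  let xW : W := ⟨x, Submodule.mem_span_singleton_self x⟩
  have h3 : r • a • xW ∈ p ^ (k + c) • ⊤ ⊓ G :=
    ⟨Submodule.smul_mem _ _ (Submodule.smul_mem_smul ha trivial), hr⟩
  rw [hk'] at h3
  have h4 : p ^ c • (p ^ k • ⊤ ⊓ G) ≤ (⊥ : Submodule R W) :=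
    Submodule.smul_le.2 fun b hb w hw => hc w hw.2 b hb
  exact congrArg Subtype.val (h4 h3 : r • a • xW = 0)

/-- Let `I` be an essential extension of a finitely generated module `A ⧸ B`. Every endomorphism
of `Hom(I, E)` compatible with restriction to `A` is bijective. The proof peels off the
`p`-power torsion of `I` for a maximal associated prime `p`, which replaces `B` by a strictly larger
submodule, and proceeds by noetherian induction on `B`. -/
theorem hull_end (A : Type u) [AddCommGroup A] [Module R A] [Module.Finite R A]
    (B : Submodule R A) : ∀ (I : Type u) [AddCommGroup I] [Module R I] (g : A →ₗ[R] I),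
    LinearMap.ker g = B → (∀ z : I, z ≠ 0 → ∃ (r : R) (a : A), r • z = g a ∧ g a ≠ 0) →
    ∀ σ : (I →ₗ[R] E) →ₗ[R] (I →ₗ[R] E), (∀ f a, σ f (g a) = f (g a)) →
    Function.Bijective σ := by
  induction B using IsNoetherian.induction with | _ B ih
  intro I _ _ g hB ess σ hσ
  obtain hI | hI := subsingleton_or_nontrivial I
  · have : Subsingleton (I →ₗ[R] E) := ⟨fun a b => LinearMap.ext fun z => by
      rw [Subsingleton.elim z 0, map_zero, map_zero]⟩
    exact ⟨Function.injective_of_subsingleton _, Function.surjective_to_subsingleton _⟩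
  obtain ⟨p, hp, hpmax⟩ := set_has_maximal_iff_noetherian.mpr ‹IsNoetherianRing R› _
    (associatedPrimes.nonempty R I)
  obtain ⟨hpp, w, hw⟩ := isAssociatedPrime_iff.1 hp
  have hw' : ∀ r, r ∈ p ↔ r • w = 0 := fun r => by
    rw [hw, Submodule.mem_colon_singleton, Submodule.mem_bot]
  have hw0 : w ≠ 0 := fun h => hpp.ne_top ((Ideal.eq_top_iff_one _).2 ((hw' 1).2 (by simp [h])))
  -- by maximality, `p` is the only associated prime of the `p`-power torsion
  have hinj : ∀ s ∉ p, ∀ z ∈ Gam p I, s • z = 0 → z = 0 := by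
    intro s hs z hz hsz
    by_contra hz0
    obtain ⟨P, hP, hzP⟩ := exists_le_isAssociatedPrime_of_isNoetherianRing R z hz0
    obtain ⟨n, hn⟩ := hz
    have h1 : p ^ n ≤ P := fun a ha => hzP (by
      rw [Submodule.mem_colon_singleton, Submodule.mem_bot]; exact hn a ha)
    have h2 : p ≤ P := hP.isPrime.le_of_pow_le h1
    have h3 : s ∈ P := hzP (by rw [Submodule.mem_colon_singleton, Submodule.mem_bot]; exact hsz)
    exact hpmax P hP (lt_of_le_of_ne h2 fun h => hs (h ▸ h3))
  have hess : ∀ z : I, (∀ a ∈ p, a • z = 0) → z ≠ 0 → ∃ s ∉ p, s • z ∈ LinearMap.range g := by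
    intro z hz hz0
    obtain ⟨r, a, hr, ha⟩ := ess z hz0
    exact ⟨r, fun hrp => ha (by rw [← hr, hz r hrp]), a, hr.symm⟩
  have hτ : ∀ f, ∀ z ∈ LinearMap.range g, (1 - σ : Module.End R (I →ₗ[R] E)) f z = 0 := by
    rintro f _ ⟨a, rfl⟩
    simp [hσ]
  have hvan := vanish_stable_Gam (E := E) p σ
  let q := (Gam p I).mkQ
  have hq : Function.Surjective q := Submodule.mkQ_surjective _
  have hfac : ∀ f : I →ₗ[R] E, (∀ z ∈ Gam p I, f z = 0) → ∃ k, k ∘ₗ q = f := fun f hf =>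
    ⟨(Gam p I).liftQ f hf, Submodule.liftQ_mkQ _ _ _⟩
  have hkq : ∀ (k : (I ⧸ Gam p I) →ₗ[R] E), ∀ z ∈ Gam p I, (k ∘ₗ q) z = 0 := fun k z hz => by
    rw [LinearMap.comp_apply, show q z = 0 from (Submodule.Quotient.mk_eq_zero _).2 hz, map_zero]
  -- the endomorphism induced by `σ` on the maps vanishing on the `p`-power torsion
  let σ' : ((I ⧸ Gam p I) →ₗ[R] E) →ₗ[R] ((I ⧸ Gam p I) →ₗ[R] E) :=
    { toFun := fun k => (Gam p I).liftQ (σ (k ∘ₗ q)) (hvan _ (hkq k))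
      map_add' := fun k l => by
        ext x; simp [LinearMap.add_comp]; rfl
      map_smul' := fun r l => by
        ext x; simp [LinearMap.smul_comp]; rfl }
  have hσ' : ∀ k, σ' k ∘ₗ q = σ (k ∘ₗ q) := fun k => Submodule.liftQ_mkQ _ _ _
  have hbij : Function.Bijective σ' := by
    refine ih (LinearMap.ker (q ∘ₗ g)) ?_ (I ⧸ Gam p I) (q ∘ₗ g) rfl ?_ σ' ?_
    · rw [← hB]
      refine lt_of_le_of_ne (fun a ha => ?_) fun heq => ?_
      · rw [LinearMap.mem_ker] at ha ⊢
        rw [LinearMap.comp_apply, ha, map_zero]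
      · obtain ⟨r, a, hr, ha⟩ := ess w hw0
        refine ha ?_
        have : a ∈ LinearMap.ker (q ∘ₗ g) := by
          rw [LinearMap.mem_ker, LinearMap.comp_apply, ← hr]
          refine (Submodule.Quotient.mk_eq_zero _).2 ((Gam p I).smul_mem r ⟨1, fun b hb => ?_⟩)
          exact (hw' b).1 (by simpa using hb)
        rw [← heq] at this
        exact this
    · intro z hz
      obtain ⟨z, rfl⟩ := hq z
      have hz' : z ∉ Gam p I := fun h => hz ((Submodule.Quotient.mk_eq_zero _).2 h)
      obtain ⟨b, hb, hb'⟩ := exists_smul_avoid p z hz'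
      obtain ⟨r, a, hr, ha⟩ := ess _ hb
      refine ⟨r * b, a, ?_, fun h => ha ?_⟩
      · rw [LinearMap.comp_apply, ← hr, map_smul, map_smul, mul_smul]
      · rw [← hr]
        refine hb' r ((Submodule.Quotient.mk_eq_zero _).1 ?_)
        rw [hr]
        exact h
    · intro k a
      have := congrArg (fun t => t (g a)) (hσ' k)
      exact this.trans (hσ _ a)
  constructor
  · rw [injective_iff_map_eq_zero]
    intro f hf
    obtain ⟨k, rfl⟩ := hfac f (tau_inj _ hinj hess _ hτ f (by simp [hf]))
    have h1 : σ' k = 0 := by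
      rw [← LinearMap.cancel_right hq, hσ', hf, LinearMap.zero_comp]
    rw [(injective_iff_map_eq_zero σ').1 hbij.1 k h1, LinearMap.zero_comp]
  · intro h
    obtain ⟨f, hf⟩ := tau_surj _ hinj hess _ hτ h
    obtain ⟨k, hk⟩ := hfac (h - σ f) fun z hz => by
      have := hf z hz
      simp only [LinearMap.sub_apply, Module.End.one_apply, sub_sub_cancel] at this
      rw [LinearMap.sub_apply, this, sub_self]
    obtain ⟨k', rfl⟩ := hbij.2 k
    refine ⟨f + k' ∘ₗ q, ?_⟩
    rw [map_add, ← hσ', hk, add_sub_cancel]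

end
end PwDual

/-! ### The converse -/

namespace PwDual
open TensorProduct
section
variable {R : Type u} [CommRing R] [IsNoetherianRing R]

/-- For `A` finitely generated with injective hull `I`, restriction `Hom(I, E) → Hom(A, E)` is a
flat cover, and it is surjective. -/
theorem exists_flat_cover (A E : Type u) [AddCommGroup A] [Module R A] [Module.Finite R A]
    [AddCommGroup E] [Module R E] [Module.Injective R E] :
    ∃ (F : Type u) (_ : AddCommGroup F) (_ : Module R F) (φ : F →ₗ[R] (A →ₗ[R] E)),
      IsFlatCover R (A →ₗ[R] E) F φ ∧ Function.Surjective φ := by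
  obtain ⟨I, _, _, g, _, hg, hess⟩ := exists_injective_hull (R := R) A
  refine ⟨I →ₗ[R] E, inferInstance, inferInstance, g.lcomp R E,
    ⟨flat_hom_injective I E, fun G _ _ hG ψ => ?_, fun σ hσ => ?_⟩, inj_lcomp_surjective hg⟩
  · obtain ⟨l, hl⟩ := Module.Injective.out (g.lTensor G)
      (Module.Flat.lTensor_preserves_injective_linearMap g hg) (TensorProduct.lift ψ)
    refine ⟨TensorProduct.curry l, ?_⟩
    ext x a
    have := hl (x ⊗ₜ a)
    simpa using this
  · refine hull_end A _ I g rfl hess σ fun f a => ?_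
    have := congrArg (fun t => t f a) hσ
    exact this

lemma smul_top_ne_of_faithful {X : Type u} [AddCommGroup X] [Module R X] [Module.Finite R X]
    {m : Ideal R} (hm : m ≠ ⊤) (h : Module.annihilator R X ≤ m) :
    (m • ⊤ : Submodule R X) ≠ ⊤ := by
  intro htop
  obtain ⟨r, hr, hrX⟩ := Submodule.exists_sub_one_mem_and_smul_eq_zero_of_fg_of_le_smul m
    (⊤ : Submodule R X) Module.Finite.fg_top htop.ge
  have : r ∈ m := h (Module.mem_annihilator.2 fun x => hrX x trivial)
  refine hm ((Ideal.eq_top_iff_one m).2 ?_)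
  have := m.sub_mem this hr
  simpa using this

lemma smul_top_of_surjective {X Y : Type u} [AddCommGroup X] [Module R X] [AddCommGroup Y]
    [Module R Y] {m : Ideal R} {f : X →ₗ[R] Y} (hf : Function.Surjective f)
    (h : (m • ⊤ : Submodule R X) = ⊤) : (m • ⊤ : Submodule R Y) = ⊤ := by
  have := congrArg (Submodule.map f) h
  rwa [Submodule.map_smul'', Submodule.map_top, LinearMap.range_eq_top.2 hf] at this

/-- Killing a maximal `C`-regular sequence in `m` yields a finitely generated module `A` with a
nonzero element annihilated by `m`, such that `Hom(Hom(C, A), E)` has injective dimension at most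
some `l`. The sequence is built by noetherian induction on the kernel `B` of `C → A`. -/
theorem exists_socle {C E : Type u} [AddCommGroup C] [Module R C]
    [AddCommGroup E] [Module R E] [Module.Injective R E] [Module.Finite R C] (m : Ideal R)
    [m.IsMaximal] (B : Submodule R C) : ∀ (A : Type u) [AddCommGroup A] [Module R A]
    (π : C →ₗ[R] A) (l : ℕ), LinearMap.ker π = B → Function.Surjective π →
      (∀ i, 0 < i → EV R C A i) →
      (∀ (N : Type u) [AddCommGroup N] [Module R N] (i : ℕ), l < i →
        EV R N ((C →ₗ[R] A) →ₗ[R] E) i) →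
      (m • ⊤ : Submodule R A) ≠ ⊤ →
    ∃ (A : Type u) (_ : AddCommGroup A) (_ : Module R A) (l : ℕ), Module.Finite R A ∧
      (∀ (N : Type u) [AddCommGroup N] [Module R N] (i : ℕ), l < i →
        EV R N ((C →ₗ[R] A) →ₗ[R] E) i) ∧ ∃ a : A, a ≠ 0 ∧ ∀ r ∈ m, r • a = 0 := by
  induction B using IsNoetherian.induction with | _ B ih
  intro A _ _ π l hB hπ hCA hl hm
  have hfin : Module.Finite R A := Module.Finite.of_surjective π hπ
  obtain hs | hs := subsingleton_or_nontrivial ((R ⧸ m) →ₗ[R] A)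
  · obtain ⟨x, hxm, hx⟩ := IsSMulRegular.subsingleton_linearMap_iff.1 hs
    rw [Ideal.annihilator_quotient] at hxm
    have hxi : Function.Injective (LinearMap.lsmul R A x) := hx
    have hex := exact_mkQ_range (LinearMap.lsmul R A x)
    let q : A →ₗ[R] modx A x := (LinearMap.range (LinearMap.lsmul R A x)).mkQ
    have hq : Function.Surjective q := Submodule.mkQ_surjective _
    refine ih (LinearMap.ker (q ∘ₗ π)) ?_ (modx A x) (q ∘ₗ π) (l + 1) rfl (hq.comp hπ)
      (fun i hi => EV.cov₃ hxi hex hq (hCA i hi) (hCA (i + 1) (by omega))) ?_ ?_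
    · rw [← hB]
      refine lt_of_le_of_ne (fun a ha => ?_) fun heq => hm ?_
      · rw [LinearMap.mem_ker] at ha ⊢
        rw [LinearMap.comp_apply, ha, map_zero]
      · have h0 : ∀ a : A, a = 0 := fun a => hxi (by
          obtain ⟨c, hc⟩ := hπ (x • a)
          have : c ∈ LinearMap.ker (q ∘ₗ π) := by
            rw [LinearMap.mem_ker, LinearMap.comp_apply, hc]
            exact (Submodule.Quotient.mk_eq_zero _).2 ⟨a, rfl⟩
          rw [← heq, LinearMap.mem_ker, hc] at this
          simpa using this)
        exact eq_top_iff.2 fun a _ => by rw [h0 a]; exact Submodule.zero_mem _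
    · intro N _ _ i hi
      obtain ⟨i, rfl⟩ : ∃ i', i = i' + 1 := ⟨i - 1, by omega⟩
      have h1 := compRight_injective (X := C) hxi
      have h2 := compRight_exact (X := C) hxi hex
      have h3 : Function.Surjective (q.compRight R : (C →ₗ[R] A) →ₗ[R] (C →ₗ[R] modx A x)) := fun k =>
        EV.lift hxi hex hq (hCA 1 one_pos) k
      exact EV.cov₁ (lcomp_injective E h3) (inj_lcomp_exact h2) (inj_lcomp_surjective h1)
        (hl N i (by omega)) (hl N (i + 1) (by omega))
    · intro htop
      refine hm (eq_top_iff.2 fun a _ => ?_)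
      have h1 : q a ∈ Submodule.map q (m • ⊤) := by
        rw [Submodule.map_smul'', Submodule.map_top, LinearMap.range_eq_top.2 hq, htop]
        trivial
      obtain ⟨b, hb, hba⟩ := h1
      have h2 : q (a - b) = 0 := by rw [map_sub, hba, sub_self]
      obtain ⟨c, hc⟩ := (Submodule.Quotient.mk_eq_zero _).1 h2
      have : a = x • c + b := by
        rw [eq_comm, ← eq_sub_iff_add_eq]; exact hc
      rw [this]
      exact Submodule.add_mem _ (Submodule.smul_mem_smul hxm trivial) hb
  · obtain ⟨k, hk⟩ := exists_ne (0 : (R ⧸ m) →ₗ[R] A)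
    refine ⟨A, inferInstance, inferInstance, l, hfin, hl, k 1, fun h => hk ?_, fun r hr => ?_⟩
    · ext
      exact h
    · have : r • (1 : R ⧸ m) = 0 := by
        rw [← map_one (Ideal.Quotient.mk m)]
        exact Ideal.Quotient.eq_zero_iff_mem.2 (by simpa using hr)
      rw [← map_smul, this, map_zero]

/-- A finitely generated module with `X ≠ m X` has `R ⧸ m` as a quotient. -/
lemma exists_surjective_residue {X : Type u} [AddCommGroup X] [Module R X] [Module.Finite R X]
    (m : Ideal R) [hm : m.IsMaximal] (h : (m • ⊤ : Submodule R X) ≠ ⊤) :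
    ∃ g : X →ₗ[R] (R ⧸ m), Function.Surjective g := by
  obtain ⟨W, hW, hmW⟩ := (eq_top_or_exists_le_coatom (m • ⊤ : Submodule R X)).resolve_left h
  have hsimple : IsSimpleModule R (X ⧸ W) := isSimpleModule_iff_isCoatom.2 hW
  obtain ⟨I, hI, ⟨e⟩⟩ := isSimpleModule_iff_quot_maximal.1 hsimple
  have : m ≤ I := fun r hr => by
    obtain ⟨x, hx⟩ := W.mkQ_surjective (e.symm 1)
    have h1 : r • (1 : R ⧸ I) = 0 := by
      rw [← e.apply_symm_apply 1, ← map_smul, ← hx, ← map_smul,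
        show W.mkQ (r • x) = 0 from (Submodule.Quotient.mk_eq_zero _).2
          (hmW (Submodule.smul_mem_smul hr trivial)), map_zero]
    rw [← map_one (Ideal.Quotient.mk I)] at h1
    have h2 : Ideal.Quotient.mk I (r * 1) = 0 := h1
    simpa [Ideal.Quotient.eq_zero_iff_mem] using h2
  obtain rfl := hm.eq_of_le hI.ne_top this
  exact ⟨e.toLinearMap ∘ₗ W.mkQ, e.surjective.comp W.mkQ_surjective⟩

/-- The inequality for the flat covers `Hom(I, E) → Hom(A, E)` forces `C_m` to have finite injective
dimension at every maximal ideal `m`. -/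
theorem part_two {C : Type u} [AddCommGroup C] [Module R C] (hC : SD R C)
    (H : ∀ (M F : Type u) (_ : AddCommGroup M) (_ : Module R M) (_ : AddCommGroup F)
      (_ : Module R F) (φ : F →ₗ[R] M), IsFlatCover R M F φ →
      injDim R (TensorProduct R C F) ≤ injDim R (TensorProduct R C M)) :
    IsPointwiseDualizing R C := by
  have := hC.fin
  rw [pointwise_iff C hC]
  intro m _ hm
  obtain ⟨E, _, _, hE, hcog⟩ := exists_injective_cogenerator R
  let hom : R ≃ₗ[R] (C →ₗ[R] C) :=
    LinearEquiv.ofBijective (LinearMap.toSpanSingleton R _ LinearMap.id) hC.hom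
  have hE' : ∀ (N : Type u) [AddCommGroup N] [Module R N] (i : ℕ), 0 < i →
      EV R N ((C →ₗ[R] C) →ₗ[R] E) i := fun N _ _ i hi =>
    (EV.of_injective hi : EV R N E i).of_equiv (.refl _ _)
      ((LinearMap.ringLmapEquivSelf R R E).symm ≪≫ₗ hom.arrowCongr (.refl _ _))
  obtain ⟨A, _, _, l, _, hl, a, ha, hma⟩ := exists_socle (E := E) m _ C LinearMap.id 0 rfl
    Function.surjective_id hC.ext hE'
    (smul_top_ne_of_faithful hm.ne_top fun r hr => by rw [hC.ann r hr]; exact m.zero_mem)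
  obtain ⟨F, _, _, φ, hφ, hφs⟩ := exists_flat_cover (R := R) A E
  have := hφ.1
  -- otherwise `Hom(A, E) = m Hom(A, E)`, and every map `A → E` would kill the socle element `a`
  have hFm : (m • ⊤ : Submodule R F) ≠ ⊤ := by
    intro htop
    obtain ⟨f, hf⟩ := hcog A a ha
    have h1 := smul_top_of_surjective hφs htop
    exact hf ((mem_smul_hom_iff m f).1 (by rw [h1]; trivial) a hma)
  -- `C ⊗ Hom(A, E) ≅ Hom(Hom(C, A), E)` by tensor evaluation
  have hM : injDim R (C ⊗[R] (A →ₗ[R] E)) ≤ l := injDim_le_iff.2 fun N _ _ i hi =>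
    (hl N i hi).of_equiv (.refl _ _) (LinearEquiv.ofBijective _ (theta_bijective C A E)).symm
  have hF := injDim_le_iff.1 ((H _ F _ _ _ _ φ hφ).trans hM)
  refine ⟨l, loc_injDim m C l fun I => ?_⟩
  rw [loc_subsingleton_iff]
  intro hann
  -- `Ext^{l+1}(R ⧸ I, C)` would have `R ⧸ m` as a quotient, so `F ⊗ R ⧸ m` would vanish
  obtain ⟨g, hg⟩ := exists_surjective_residue m (smul_top_ne_of_faithful hm.ne_top hann)
  have h1 : EV R (R ⧸ I) (F ⊗[R] C) (l + 1) :=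
    (hF (R ⧸ I) _ _ (l + 1) (by omega)).of_equiv (.refl _ _) (TensorProduct.comm R C F)
  rw [EV_tensor_iff] at h1
  have h2 : Subsingleton ((R ⧸ m) ⊗[R] F) :=
    (((TensorProduct.comm R F (R ⧸ m)).surjective.comp
      (LinearMap.lTensor_surjective F hg))).subsingleton
  exact hFm (smul_top_of_tensor h2)

end
end PwDual

/-- (i) If `C` is pointwise dualizing over a Noetherian ring `R`, `M` is
cotorsion, and `φ : F → M` is a flat cover, then `C`-id`_R(F) ≤ C`-id`_R(M)`.
(ii) Conversely, if `C`-id`_R(F) ≤ C`-id`_R(M)` for every module `M` and every flat cover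
`φ : F → M`, then `C` is pointwise dualizing. -/
theorem pointwiseDualizing_flatCover_cinjdim (R : Type u) [CommRing R] [IsNoetherianRing R]
    (C : Type u) [AddCommGroup C] [Module R C] (hC : IsSemidualizing R C) :
    (IsPointwiseDualizing R C →
      ∀ (M F : Type u) (_ : AddCommGroup M) (_ : Module R M) (_ : AddCommGroup F)
        (_ : Module R F) (φ : F →ₗ[R] M), IsCotorsion R M → IsFlatCover R M F φ →
          injDim R (TensorProduct R C F) ≤ injDim R (TensorProduct R C M)) ∧
    ((∀ (M F : Type u) (_ : AddCommGroup M) (_ : Module R M) (_ : AddCommGroup F)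
        (_ : Module R F) (φ : F →ₗ[R] M), IsFlatCover R M F φ →
          injDim R (TensorProduct R C F) ≤ injDim R (TensorProduct R C M)) →
      IsPointwiseDualizing R C) := by
  have h := PwDual.isSemidualizing_iff.1 hC
  exact ⟨fun hP M F _ _ _ _ φ hM hφ => PwDual.part_one h
    (fun N _ _ _ j _ i hij => PwDual.grade_condition h hP N j i hij) hM hφ,
    fun H => PwDual.part_two h H⟩
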